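/- arXiv:2401.08078 — 4 statements merged into one kernel-verified Lean document; each statement's English description precedes it below -/
import Mathlib

section
/- Let 𝒜 be a weakly idempotent complete exact category. Let S_C be the class of hereditary complete cotorsion pairs (𝒳,𝒴) in 𝒜 whose core ω = 𝒳∩𝒴 is contravariantly finite, and let S_M be the class of weakly projective model structures on 𝒜. Then the maps Φ : (𝒳,𝒴) ↦ (CoFib_ω, Fib_ω, Weq_ω) and Ψ : (CoFib, Fib, Weq) ↦ (𝒞, T𝓕), where 𝒞 is the class of cofibrant objects and T𝓕 the class of trivially fibrant objects, are mutually inverse bijections between S_C and S_M. -/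
open CategoryTheory Limits ZeroObject

universe v u

/-- An exact structure (Quillen exact category) on an additive category `𝒜`:
a class of conflations (kernel-cokernel pairs), closed under isomorphisms,
with identities deflations, deflations closed under composition and stable
under pullback, and inflations stable under pushout. -/
structure ExactStructure (𝒜 : Type u) [Category.{v} 𝒜] [Preadditive 𝒜]
    [HasZeroObject 𝒜] [HasBinaryBiproducts 𝒜] : Type (max u v) where
  conflation : ∀ ⦃X Y Z : 𝒜⦄, (X ⟶ Y) → (Y ⟶ Z) → Prop
  comp_zero : ∀ {X Y Z : 𝒜} {i : X ⟶ Y} {d : Y ⟶ Z}, conflation i d → i ≫ d = 0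
  isKernel : ∀ {X Y Z : 𝒜} {i : X ⟶ Y} {d : Y ⟶ Z} (h : conflation i d),
    Nonempty (IsLimit (KernelFork.ofι i (comp_zero h)))
  isCokernel : ∀ {X Y Z : 𝒜} {i : X ⟶ Y} {d : Y ⟶ Z} (h : conflation i d),
    Nonempty (IsColimit (CokernelCofork.ofπ d (comp_zero h)))
  conflation_iso : ∀ {X Y Z X' Y' Z' : 𝒜} {i : X ⟶ Y} {d : Y ⟶ Z}
    (eX : X ≅ X') (eY : Y ≅ Y') (eZ : Z ≅ Z') {i' : X' ⟶ Y'} {d' : Y' ⟶ Z'},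
    conflation i d → i ≫ eY.hom = eX.hom ≫ i' → d ≫ eZ.hom = eY.hom ≫ d' →
    conflation i' d'
  id_deflation : ∀ X : 𝒜, conflation (0 : (0 : 𝒜) ⟶ X) (𝟙 X)
  deflation_comp : ∀ {X Y Z X' W : 𝒜} {i : X ⟶ Y} {d : Y ⟶ Z} {i' : X' ⟶ Z} {d' : Z ⟶ W},
    conflation i d → conflation i' d' → ∃ (K : 𝒜) (k : K ⟶ Y), conflation k (d ≫ d')
  pullback_deflation : ∀ {X Y Z Z' : 𝒜} {i : X ⟶ Y} {d : Y ⟶ Z},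
    conflation i d → ∀ (f : Z' ⟶ Z),
    ∃ (Y' : 𝒜) (f' : Y' ⟶ Y) (d' : Y' ⟶ Z') (K : 𝒜) (k : K ⟶ Y'),
      IsPullback f' d' d f ∧ conflation k d'
  pushout_inflation : ∀ {X Y Z X' : 𝒜} {i : X ⟶ Y} {d : Y ⟶ Z},
    conflation i d → ∀ (f : X ⟶ X'),
    ∃ (Y' : 𝒜) (f' : Y ⟶ Y') (i' : X' ⟶ Y') (Q : 𝒜) (q : Y' ⟶ Q),
      IsPushout i f f' i' ∧ conflation i' q

variable {𝒜 : Type u} [Category.{v} 𝒜] [Preadditive 𝒜] [HasZeroObject 𝒜]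
  [HasBinaryBiproducts 𝒜]

/-- `f` is an inflation: the first map of some conflation. -/
def IsInflation (E : ExactStructure 𝒜) {X Y : 𝒜} (i : X ⟶ Y) : Prop :=
  ∃ (Z : 𝒜) (d : Y ⟶ Z), E.conflation i d

/-- `f` is a deflation: the second map of some conflation. -/
def IsDeflation (E : ExactStructure 𝒜) {Y Z : 𝒜} (d : Y ⟶ Z) : Prop :=
  ∃ (X : 𝒜) (i : X ⟶ Y), E.conflation i d

/-- `𝒜` is weakly idempotent complete: every split epimorphism is a deflation. -/
def IsWIC (E : ExactStructure 𝒜) : Prop :=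
  ∀ {X Y : 𝒜} (d : X ⟶ Y) (s : Y ⟶ X), s ≫ d = 𝟙 Y → IsDeflation E d

/-- `Ext¹(A,B) = 0`: every conflation `B ⟶ M ⟶ A` splits. -/
def Ext1IsZero (E : ExactStructure 𝒜) (A B : 𝒜) : Prop :=
  ∀ {M : 𝒜} (i : B ⟶ M) (d : M ⟶ A), E.conflation i d → ∃ r : M ⟶ B, i ≫ r = 𝟙 B

/-- `(X, Y)` is a cotorsion pair: each class is the `Ext¹`-orthogonal of the other. -/
def IsCotorsionPair (E : ExactStructure 𝒜) (X Y : Set 𝒜) : Prop :=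
  (∀ A : 𝒜, A ∈ X ↔ ∀ B ∈ Y, Ext1IsZero E A B) ∧
  (∀ B : 𝒜, B ∈ Y ↔ ∀ A ∈ X, Ext1IsZero E A B)

/-- Completeness of a cotorsion pair: every object has approximation sequences. -/
def IsCompleteCP (E : ExactStructure 𝒜) (X Y : Set 𝒜) : Prop :=
  ∀ A : 𝒜,
    (∃ (Y₀ X₀ : 𝒜) (i : Y₀ ⟶ X₀) (d : X₀ ⟶ A), E.conflation i d ∧ X₀ ∈ X ∧ Y₀ ∈ Y) ∧
    (∃ (Y₁ X₁ : 𝒜) (i : A ⟶ Y₁) (d : Y₁ ⟶ X₁), E.conflation i d ∧ X₁ ∈ X ∧ Y₁ ∈ Y)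

/-- Heredity of a cotorsion pair: `X` is closed under kernels of deflations and
`Y` is closed under cokernels of inflations. -/
def IsHereditaryCP (E : ExactStructure 𝒜) (X Y : Set 𝒜) : Prop :=
  (∀ {K A B : 𝒜} (i : K ⟶ A) (d : A ⟶ B), E.conflation i d → A ∈ X → B ∈ X → K ∈ X) ∧
  (∀ {K A B : 𝒜} (i : K ⟶ A) (d : A ⟶ B), E.conflation i d → K ∈ Y → A ∈ Y → B ∈ Y)

/-- `t : W ⟶ B` is a right `ω`-approximation of `B`. -/
def IsRightApprox (ω : Set 𝒜) {W B : 𝒜} (t : W ⟶ B) : Prop :=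
  W ∈ ω ∧ ∀ (W' : 𝒜), W' ∈ ω → ∀ g : W' ⟶ B, ∃ h : W' ⟶ W, h ≫ t = g

/-- `ω` is contravariantly finite: every object has a right `ω`-approximation. -/
def IsContravariantlyFinite (ω : Set 𝒜) : Prop :=
  ∀ B : 𝒜, ∃ (W : 𝒜) (t : W ⟶ B), IsRightApprox ω t

/-- A full additive subcategory closed under isomorphisms and direct summands,
viewed as a class of objects. -/
def AdditivelyClosed (S : Set 𝒜) : Prop :=
  (0 : 𝒜) ∈ S ∧ (∀ A B : 𝒜, A ∈ S → B ∈ S → (A ⊞ B) ∈ S) ∧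
  (∀ {A B : 𝒜}, (A ≅ B) → A ∈ S → B ∈ S) ∧
  (∀ {A B : 𝒜} (i : A ⟶ B) (r : B ⟶ A), i ≫ r = 𝟙 A → B ∈ S → A ∈ S)

/-- `CoFib_ω`: inflations with cokernel in `X`. -/
def CoFibO (E : ExactStructure 𝒜) (X : Set 𝒜) : MorphismProperty 𝒜 :=
  fun _ B f => ∃ (Z : 𝒜) (d : B ⟶ Z), E.conflation f d ∧ Z ∈ X

/-- `Fib_ω`: the `ω`-epic morphisms. -/
def FibO (ω : Set 𝒜) : MorphismProperty 𝒜 :=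
  fun A B f => ∀ (W : 𝒜), W ∈ ω → ∀ g : W ⟶ B, ∃ h : W ⟶ A, h ≫ f = g

/-- `Weq_ω`: morphisms `f : A ⟶ B` such that for some `W ∈ ω` and `t : W ⟶ B`,
`(f,t) : A ⊞ W ⟶ B` is a deflation with kernel in `Y`. -/
def WeqO (E : ExactStructure 𝒜) (ω Y : Set 𝒜) : MorphismProperty 𝒜 :=
  fun A B f => ∃ (W : 𝒜) (_ : W ∈ ω) (t : W ⟶ B) (K : 𝒜) (k : K ⟶ A ⊞ W),
    E.conflation k (biprod.desc f t) ∧ K ∈ Y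

/-- `TCoFib_ω`: split monomorphisms with cokernel in `ω`. -/
def TCoFibO (E : ExactStructure 𝒜) (ω : Set 𝒜) : MorphismProperty 𝒜 :=
  fun A B f => (∃ r : B ⟶ A, f ≫ r = 𝟙 A) ∧
    ∃ (Z : 𝒜) (d : B ⟶ Z), E.conflation f d ∧ Z ∈ ω

/-- `TFib_ω`: deflations with kernel in `Y`. -/
def TFibO (E : ExactStructure 𝒜) (Y : Set 𝒜) : MorphismProperty 𝒜 :=
  fun A _ f => ∃ (K : 𝒜) (k : K ⟶ A), E.conflation k f ∧ K ∈ Y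

/-- `g` is a retract of `f`. -/
def IsRetractMor {A' B' A B : 𝒜} (g : A' ⟶ B') (f : A ⟶ B) : Prop :=
  ∃ (φ₁ : A' ⟶ A) (ψ₁ : A ⟶ A') (φ₂ : B' ⟶ B) (ψ₂ : B ⟶ B'),
    φ₁ ≫ ψ₁ = 𝟙 A' ∧ φ₂ ≫ ψ₂ = 𝟙 B' ∧ φ₁ ≫ f = g ≫ φ₂ ∧ f ≫ ψ₂ = ψ₁ ≫ g

/-- A (closed, Quillen) model structure, given by classes of cofibrations,
fibrations and weak equivalences. -/
structure IsModelStructure (C F W : MorphismProperty 𝒜) : Prop where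
  weq_comp : ∀ {X Y Z : 𝒜} (f : X ⟶ Y) (g : Y ⟶ Z), W f → W g → W (f ≫ g)
  weq_cancel_left : ∀ {X Y Z : 𝒜} (f : X ⟶ Y) (g : Y ⟶ Z), W f → W (f ≫ g) → W g
  weq_cancel_right : ∀ {X Y Z : 𝒜} (f : X ⟶ Y) (g : Y ⟶ Z), W g → W (f ≫ g) → W f
  retract_cofib : ∀ {A' B' A B : 𝒜} (g : A' ⟶ B') (f : A ⟶ B),
    IsRetractMor g f → C f → C g
  retract_fib : ∀ {A' B' A B : 𝒜} (g : A' ⟶ B') (f : A ⟶ B),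
    IsRetractMor g f → F f → F g
  retract_weq : ∀ {A' B' A B : 𝒜} (g : A' ⟶ B') (f : A ⟶ B),
    IsRetractMor g f → W f → W g
  lifting_left : ∀ {A B X Y : 𝒜} (i : A ⟶ B) (p : X ⟶ Y) (a : A ⟶ X) (b : B ⟶ Y),
    C i → W i → F p → a ≫ p = i ≫ b → ∃ s : B ⟶ X, i ≫ s = a ∧ s ≫ p = b
  lifting_right : ∀ {A B X Y : 𝒜} (i : A ⟶ B) (p : X ⟶ Y) (a : A ⟶ X) (b : B ⟶ Y),
    C i → F p → W p → a ≫ p = i ≫ b → ∃ s : B ⟶ X, i ≫ s = a ∧ s ≫ p = b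
  fact_left : ∀ {A B : 𝒜} (f : A ⟶ B), ∃ (Z : 𝒜) (i : A ⟶ Z) (p : Z ⟶ B),
    i ≫ p = f ∧ C i ∧ W i ∧ F p
  fact_right : ∀ {A B : 𝒜} (f : A ⟶ B), ∃ (Z : 𝒜) (j : A ⟶ Z) (q : Z ⟶ B),
    j ≫ q = f ∧ C j ∧ F q ∧ W q

/-- An object is cofibrant if `0 ⟶ X` is a cofibration. -/
def Cofibrant (C : MorphismProperty 𝒜) (A : 𝒜) : Prop := C (0 : (0 : 𝒜) ⟶ A)

/-- An object is fibrant if `X ⟶ 0` is a fibration. -/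
def Fibrant (F : MorphismProperty 𝒜) (A : 𝒜) : Prop := F (0 : A ⟶ (0 : 𝒜))

/-- An object is trivial if `0 ⟶ X` is a weak equivalence. -/
def TrivialObj (W : MorphismProperty 𝒜) (A : 𝒜) : Prop := W (0 : (0 : 𝒜) ⟶ A)

/-- `P` is projective in the exact category. -/
def IsProjObj (E : ExactStructure 𝒜) (P : 𝒜) : Prop :=
  ∀ {A B : 𝒜} (d : A ⟶ B), IsDeflation E d → ∀ g : P ⟶ B, ∃ h : P ⟶ A, h ≫ d = g

/-- The exact category has enough projective objects. -/
def HasEnoughProj (E : ExactStructure 𝒜) : Prop :=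
  ∀ X : 𝒜, ∃ (P : 𝒜) (d : P ⟶ X), IsProjObj E P ∧ IsDeflation E d

/-- Cofibrations are exactly the inflations with cofibrant cokernel. -/
def CofibsAreInflWithCofibCoker (E : ExactStructure 𝒜) (C : MorphismProperty 𝒜) : Prop :=
  ∀ {A B : 𝒜} (f : A ⟶ B),
    C f ↔ ∃ (Z : 𝒜) (d : B ⟶ Z), E.conflation f d ∧ Cofibrant C Z

/-- Fibrations are exactly the deflations with fibrant kernel. -/
def FibsAreDeflWithFibKer (E : ExactStructure 𝒜) (F : MorphismProperty 𝒜) : Prop :=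
  ∀ {A B : 𝒜} (f : A ⟶ B),
    F f ↔ ∃ (K : 𝒜) (k : K ⟶ A), E.conflation k f ∧ Fibrant F K

/-- Trivial fibrations are exactly the deflations with trivially fibrant kernel. -/
def TrivFibsAreDeflWithTrivFibKer (E : ExactStructure 𝒜)
    (F W : MorphismProperty 𝒜) : Prop :=
  ∀ {A B : 𝒜} (f : A ⟶ B),
    (F f ∧ W f) ↔ ∃ (K : 𝒜) (k : K ⟶ A), E.conflation k f ∧ Fibrant F K ∧ TrivialObj W K

/-- Every cofibration is an inflation. -/
def CofibsAreInfl (E : ExactStructure 𝒜) (C : MorphismProperty 𝒜) : Prop :=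
  ∀ {A B : 𝒜} (f : A ⟶ B), C f → IsInflation E f

/-- Every trivial fibration is a deflation. -/
def TrivFibsAreDefl (E : ExactStructure 𝒜) (F W : MorphismProperty 𝒜) : Prop :=
  ∀ {A B : 𝒜} (f : A ⟶ B), F f → W f → IsDeflation E f

/-- An exact model structure in the sense of Gillespie. -/
def IsExactModelStr (E : ExactStructure 𝒜) (C F W : MorphismProperty 𝒜) : Prop :=
  IsModelStructure C F W ∧ CofibsAreInflWithCofibCoker E C ∧ FibsAreDeflWithFibKer E F

/-- A weakly projective model structure: every object is fibrant, cofibrations are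
exactly the inflations with cofibrant cokernel, and trivial fibrations are exactly
the deflations with trivially fibrant kernel. -/
def IsWeaklyProjModelStr (E : ExactStructure 𝒜) (C F W : MorphismProperty 𝒜) : Prop :=
  IsModelStructure C F W ∧ (∀ A : 𝒜, Fibrant F A) ∧
    CofibsAreInflWithCofibCoker E C ∧ TrivFibsAreDeflWithTrivFibKer E F W

/-- A projective model structure: an exact model structure with every object fibrant. -/
def IsProjectiveModelStr (E : ExactStructure 𝒜) (C F W : MorphismProperty 𝒜) : Prop :=
  IsExactModelStr E C F W ∧ (∀ A : 𝒜, Fibrant F A)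

/-- A class of objects is thick: closed under direct summands and two-out-of-three
in conflations. -/
def IsThick (E : ExactStructure 𝒜) (S : Set 𝒜) : Prop :=
  (∀ {A B : 𝒜} (i : A ⟶ B) (r : B ⟶ A), i ≫ r = 𝟙 A → B ∈ S → A ∈ S) ∧
  (∀ {X Y Z : 𝒜} (i : X ⟶ Y) (d : Y ⟶ Z), E.conflation i d →
    ((X ∈ S → Y ∈ S → Z ∈ S) ∧ (X ∈ S → Z ∈ S → Y ∈ S) ∧ (Y ∈ S → Z ∈ S → X ∈ S)))


set_option linter.unusedSectionVars false

section HelpersA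

variable {E : ExactStructure 𝒜}

lemma conf_mono {X Y Z : 𝒜} {i : X ⟶ Y} {d : Y ⟶ Z} (h : E.conflation i d) : Mono i := by
  obtain ⟨hk⟩ := E.isKernel h
  exact ⟨fun a b hab => Fork.IsLimit.hom_ext hk (by simpa using hab)⟩

lemma conf_epi {X Y Z : 𝒜} {i : X ⟶ Y} {d : Y ⟶ Z} (h : E.conflation i d) : Epi d := by
  obtain ⟨hk⟩ := E.isCokernel h
  exact ⟨fun a b hab => Cofork.IsColimit.hom_ext hk (by simpa using hab)⟩

lemma conf_lift {X Y Z T : 𝒜} {i : X ⟶ Y} {d : Y ⟶ Z} (h : E.conflation i d) (f : T ⟶ Y)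
    (hf : f ≫ d = 0) : ∃ g : T ⟶ X, g ≫ i = f := by
  obtain ⟨hk⟩ := E.isKernel h
  obtain ⟨g, hg⟩ := KernelFork.IsLimit.lift' hk f hf
  exact ⟨g, by simpa using hg⟩

lemma conf_desc {X Y Z T : 𝒜} {i : X ⟶ Y} {d : Y ⟶ Z} (h : E.conflation i d) (f : Y ⟶ T)
    (hf : i ≫ f = 0) : ∃ g : Z ⟶ T, d ≫ g = f := by
  obtain ⟨hk⟩ := E.isCokernel h
  obtain ⟨g, hg⟩ := CokernelCofork.IsColimit.desc' hk f hf
  exact ⟨g, by simpa using hg⟩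

lemma mono_zero {X Y T : 𝒜} {i : X ⟶ Y} (h : Mono i) {f : T ⟶ X} (hf : f ≫ i = 0) : f = 0 :=
  (cancel_mono i).1 (by simpa using hf)

lemma epi_zero {X Y T : 𝒜} {i : X ⟶ Y} (h : Epi i) {f : Y ⟶ T} (hf : i ≫ f = 0) : f = 0 :=
  (cancel_epi i).1 (by simpa using hf)

/-- Replace the kernel of a deflation. -/
lemma conf_of_defl {X Y Z X' : 𝒜} {i : X ⟶ Y} {d : Y ⟶ Z} (h : E.conflation i d)
    (i' : X' ⟶ Y) (hm : Mono i') (h0 : i' ≫ d = 0) (g : X ⟶ X') (hg : g ≫ i' = i) :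
    E.conflation i' d := by
  obtain ⟨g', hg'⟩ := conf_lift h i' h0
  have := conf_mono h
  refine E.conflation_iso (i := i) (d := d) ⟨g, g', ?_, ?_⟩ (Iso.refl _) (Iso.refl _) h ?_ ?_
  · rw [← cancel_mono i]; simp [hg', hg]
  · rw [← cancel_mono i']; simp [hg', hg]
  · simp [hg]
  · simp

lemma conf_of_infl {X Y Z Z' : 𝒜} {i : X ⟶ Y} {d : Y ⟶ Z} (h : E.conflation i d)
    (d' : Y ⟶ Z') (hm : Epi d') (h0 : i ≫ d' = 0) (g : Z' ⟶ Z) (hg : d' ≫ g = d) :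
    E.conflation i d' := by
  obtain ⟨g', hg'⟩ := conf_desc h d' h0
  have := conf_epi h
  refine E.conflation_iso (i := i) (d := d) (Iso.refl _) (Iso.refl _) ⟨g', g, ?_, ?_⟩ h ?_ ?_
  · rw [← cancel_epi d]; simp [reassoc_of% hg', hg]
  · rw [← cancel_epi d']; simp [reassoc_of% hg, hg']
  · simp
  · simp [hg']

lemma mkPB {P X Y Z : 𝒜} {fst : P ⟶ X} {snd : P ⟶ Y} {f : X ⟶ Z} {g : Y ⟶ Z}
    (w : fst ≫ f = snd ≫ g)
    (ex : ∀ (T : 𝒜) (a : T ⟶ X) (b : T ⟶ Y), a ≫ f = b ≫ g →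
      ∃ l : T ⟶ P, l ≫ fst = a ∧ l ≫ snd = b)
    (un : ∀ (T : 𝒜) (l : T ⟶ P), l ≫ fst = 0 → l ≫ snd = 0 → l = 0) :
    IsPullback fst snd f g := by
  refine ⟨⟨w⟩, ⟨PullbackCone.IsLimit.mk w
    (fun s => (ex s.pt s.fst s.snd s.condition).choose)
    (fun s => (ex s.pt s.fst s.snd s.condition).choose_spec.1)
    (fun s => (ex s.pt s.fst s.snd s.condition).choose_spec.2) ?_⟩⟩
  intro s m h1 h2
  have hs := (ex s.pt s.fst s.snd s.condition).choose_spec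
  rw [← sub_eq_zero]
  apply un
  · rw [Preadditive.sub_comp, h1, hs.1, sub_self]
  · rw [Preadditive.sub_comp, h2, hs.2, sub_self]

lemma mkPO {P X Y Z : 𝒜} {f : Z ⟶ X} {g : Z ⟶ Y} {inl : X ⟶ P} {inr : Y ⟶ P}
    (w : f ≫ inl = g ≫ inr)
    (ex : ∀ (T : 𝒜) (a : X ⟶ T) (b : Y ⟶ T), f ≫ a = g ≫ b →
      ∃ l : P ⟶ T, inl ≫ l = a ∧ inr ≫ l = b)
    (un : ∀ (T : 𝒜) (l : P ⟶ T), inl ≫ l = 0 → inr ≫ l = 0 → l = 0) :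
    IsPushout f g inl inr := by
  refine ⟨⟨w⟩, ⟨PushoutCocone.IsColimit.mk w
    (fun s => (ex s.pt s.inl s.inr s.condition).choose)
    (fun s => (ex s.pt s.inl s.inr s.condition).choose_spec.1)
    (fun s => (ex s.pt s.inl s.inr s.condition).choose_spec.2) ?_⟩⟩
  intro s m h1 h2
  have hs := (ex s.pt s.inl s.inr s.condition).choose_spec
  rw [← sub_eq_zero]
  apply un
  · rw [Preadditive.comp_sub, h1, hs.1, sub_self]
  · rw [Preadditive.comp_sub, h2, hs.2, sub_self]

lemma defl_of_pb {P X Y Z : 𝒜} {fst : P ⟶ X} {snd : P ⟶ Y} {f : X ⟶ Z} {g : Y ⟶ Z}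
    (hp : IsPullback fst snd f g) (hd : IsDeflation E f) : IsDeflation E snd := by
  obtain ⟨K, k, h⟩ := hd
  obtain ⟨Y', f', d', K', k', hp', h'⟩ := E.pullback_deflation h g
  refine ⟨K', k' ≫ (hp'.isoIsPullback _ _ hp).hom, ?_⟩
  refine E.conflation_iso (Iso.refl _) (hp'.isoIsPullback _ _ hp) (Iso.refl _) h' ?_ ?_
  · simp
  · simp

lemma infl_of_po {P X Y Z : 𝒜} {f : Z ⟶ X} {g : Z ⟶ Y} {inl : X ⟶ P} {inr : Y ⟶ P}
    (hp : IsPushout f g inl inr) (hd : IsInflation E f) : IsInflation E inr := by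
  obtain ⟨K, k, h⟩ := hd
  obtain ⟨Y', f', d', K', k', hp', h'⟩ := E.pushout_inflation h g
  refine ⟨K', (hp'.isoIsPushout _ _ hp).inv ≫ k', ?_⟩
  refine E.conflation_iso (Iso.refl _) (hp'.isoIsPushout _ _ hp) (Iso.refl _) h' ?_ ?_
  · simp
  · simp

lemma conf_pb {X Y Z Z' : 𝒜} {i : X ⟶ Y} {d : Y ⟶ Z} (h : E.conflation i d) (f : Z' ⟶ Z) :
    ∃ (Y' : 𝒜) (f' : Y' ⟶ Y) (d' : Y' ⟶ Z') (i' : X ⟶ Y'),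
      IsPullback f' d' d f ∧ E.conflation i' d' ∧ i' ≫ f' = i := by
  obtain ⟨Y', f', d', K', k', hp, h'⟩ := E.pullback_deflation h f
  have hi : i ≫ d = (0 : X ⟶ Z') ≫ f := by simp [E.comp_zero h]
  obtain ⟨g, hg⟩ := conf_lift h (k' ≫ f') (by
    rw [Category.assoc, hp.w, reassoc_of% (E.comp_zero h'), zero_comp])
  have := conf_mono h
  refine ⟨Y', f', d', hp.lift i 0 hi, hp, ?_, by simp⟩
  refine conf_of_defl h' _ ?_ (by simp) g ?_
  · have : Mono (hp.lift i 0 hi ≫ f') := by simpa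
    exact mono_of_mono _ f'
  · apply hp.hom_ext
    · simp [hg]
    · simp [E.comp_zero h']

lemma conf_po {X Y Z X' : 𝒜} {i : X ⟶ Y} {d : Y ⟶ Z} (h : E.conflation i d) (f : X ⟶ X') :
    ∃ (Y' : 𝒜) (f' : Y ⟶ Y') (i' : X' ⟶ Y') (d' : Y' ⟶ Z),
      IsPushout i f f' i' ∧ E.conflation i' d' ∧ f' ≫ d' = d := by
  obtain ⟨Y', f', i', K', k', hp, h'⟩ := E.pushout_inflation h f
  have hi : i ≫ d = f ≫ (0 : X' ⟶ Z) := by simp [E.comp_zero h]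
  obtain ⟨g, hg⟩ := conf_desc h (f' ≫ k') (by
    rw [← Category.assoc, hp.w, Category.assoc, E.comp_zero h', comp_zero])
  have := conf_epi h
  refine ⟨Y', f', i', hp.desc d 0 hi, hp, ?_, by simp⟩
  refine conf_of_infl h' _ ?_ (by simp) g ?_
  · have : Epi (f' ≫ hp.desc d 0 hi) := by simpa
    exact epi_of_epi f' _
  · apply hp.hom_ext
    · simp [hg]
    · simp [E.comp_zero h']


end HelpersA

section HelpersB

variable {E : ExactStructure 𝒜}

lemma conf_split (hwic : IsWIC E) {A B D : 𝒜} (i : A ⟶ B) (r : B ⟶ A) (s : D ⟶ B) (d : B ⟶ D)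
    (h1 : i ≫ r = 𝟙 A) (h2 : s ≫ d = 𝟙 D) (h3 : i ≫ d = 0) (h4 : r ≫ i + d ≫ s = 𝟙 B) :
    E.conflation i d := by
  obtain ⟨K, k, h⟩ := hwic d s h2
  have hm : Mono i := by
    have : Mono (i ≫ r) := by rw [h1]; infer_instance
    exact mono_of_mono i r
  refine conf_of_defl h i hm h3 (k ≫ r) ?_
  have : k ≫ (r ≫ i + d ≫ s) = k := by rw [h4]; simp
  rw [Preadditive.comp_add, reassoc_of% (E.comp_zero h)] at this
  simpa using this

lemma conf_inl (hwic : IsWIC E) (A B : 𝒜) :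
    E.conflation (biprod.inl : A ⟶ A ⊞ B) (biprod.snd : A ⊞ B ⟶ B) :=
  conf_split hwic _ biprod.fst biprod.inr _ (by simp) (by simp) (by simp) biprod.total

/-- A retraction of the inflation gives a splitting. -/
lemma sec_of_retr {A B D : 𝒜} {i : A ⟶ B} {d : B ⟶ D} (h : E.conflation i d) (r : B ⟶ A)
    (hr : i ≫ r = 𝟙 A) : ∃ s : D ⟶ B, s ≫ d = 𝟙 D ∧ r ≫ i + d ≫ s = 𝟙 B ∧ s ≫ r = 0 := by
  obtain ⟨s, hs⟩ := conf_desc h (𝟙 B - r ≫ i) (by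
    rw [Preadditive.comp_sub, reassoc_of% hr]; simp)
  have := conf_epi h
  refine ⟨s, ?_, ?_, ?_⟩
  · rw [← cancel_epi d, reassoc_of% hs]
    simp [Preadditive.sub_comp, E.comp_zero h]
  · rw [hs]; abel
  · rw [← cancel_epi d, reassoc_of% hs]
    simp [Preadditive.sub_comp, hr]

lemma retr_of_sec {A B D : 𝒜} {i : A ⟶ B} {d : B ⟶ D} (h : E.conflation i d) (s : D ⟶ B)
    (hs : s ≫ d = 𝟙 D) : ∃ r : B ⟶ A, i ≫ r = 𝟙 A ∧ r ≫ i + d ≫ s = 𝟙 B := by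
  obtain ⟨r, hr⟩ := conf_lift h (𝟙 B - d ≫ s) (by
    simp [Preadditive.sub_comp, hs])
  have := conf_mono h
  refine ⟨r, ?_, ?_⟩
  · rw [← cancel_mono i, Category.assoc, hr]
    simp [Preadditive.comp_sub, reassoc_of% (E.comp_zero h)]
  · rw [hr]; abel

lemma defl_comp {A B D : 𝒜} {f : A ⟶ B} {g : B ⟶ D} (hf : IsDeflation E f)
    (hg : IsDeflation E g) : IsDeflation E (f ≫ g) := by
  obtain ⟨K, k, h⟩ := hf
  obtain ⟨K', k', h'⟩ := hg
  exact E.deflation_comp h h'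

lemma defl_map {Y Z Z' : 𝒜} {d : Y ⟶ Z} (hd : IsDeflation E d) :
    IsDeflation E (biprod.map d (𝟙 Z')) := by
  refine defl_of_pb (fst := biprod.fst) (g := biprod.fst) (mkPB (by simp) ?_ ?_) hd
  · intro T a b hab
    refine ⟨biprod.lift a (b ≫ biprod.snd), by simp, ?_⟩
    ext <;> simp [hab]
  · intro T l h1 h2
    have h3 := congrArg (· ≫ biprod.snd) h2
    ext
    · simpa using h1
    · simpa using h3

lemma defl_map' {Y Z Z' : 𝒜} {d : Y ⟶ Z} (hd : IsDeflation E d) :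
    IsDeflation E (biprod.map (𝟙 Z') d) := by
  refine defl_of_pb (fst := biprod.snd) (g := biprod.snd) (mkPB (by simp) ?_ ?_) hd
  · intro T a b hab
    refine ⟨biprod.lift (b ≫ biprod.fst) a, by simp, ?_⟩
    ext <;> simp [hab]
  · intro T l h1 h2
    have h3 := congrArg (· ≫ biprod.fst) h2
    ext
    · simpa using h3
    · simpa using h1

lemma defl_desc (hwic : IsWIC E) {Y Z Z' : 𝒜} {d : Y ⟶ Z} (hd : IsDeflation E d) (f : Z' ⟶ Z) :
    IsDeflation E (biprod.desc d f) := by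
  have h1 : IsDeflation E (biprod.desc (𝟙 Z) f) := hwic _ biprod.inl (by simp)
  have := defl_comp (defl_map (Z' := Z') hd) h1
  have e : biprod.map d (𝟙 Z') ≫ biprod.desc (𝟙 Z) f = biprod.desc d f := by
    ext <;> simp
  rwa [e] at this

lemma defl_cancel (hwic : IsWIC E) {A B D : 𝒜} (f : A ⟶ B) (g : B ⟶ D)
    (h : IsDeflation E (f ≫ g)) : IsDeflation E g := by
  have hge : Epi g := by
    obtain ⟨K, k, hk⟩ := h
    have := conf_epi hk
    exact epi_of_epi f g
  have h1 := defl_desc hwic h g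
  have h2 : IsDeflation E (biprod.lift biprod.fst (biprod.snd - biprod.fst ≫ f) :
      A ⊞ B ⟶ A ⊞ B) := by
    refine hwic _ (biprod.lift biprod.fst (biprod.snd + biprod.fst ≫ f)) ?_
    ext <;> simp
  have h3 := defl_comp h2 h1
  have e : biprod.lift biprod.fst (biprod.snd - biprod.fst ≫ f) ≫ biprod.desc (f ≫ g) g
      = (biprod.snd : A ⊞ B ⟶ B) ≫ g := by
    ext <;> simp
  rw [e] at h3
  obtain ⟨K, k, hk⟩ := h3
  obtain ⟨a, ha⟩ := conf_lift hk biprod.inl (by simp)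
  have hka := conf_mono hk
  obtain ⟨K', m, hm⟩ := hwic (k ≫ biprod.fst) a (by rw [reassoc_of% ha]; simp)
  obtain ⟨ρ, hρ, hρ'⟩ := retr_of_sec hm a (by rw [reassoc_of% ha]; simp)
  have hmm := conf_mono hm
  have hρm : ρ ≫ m = 𝟙 K - k ≫ biprod.fst ≫ a := by
    rw [← hρ']; simp
  have haρ : a ≫ ρ = 0 := by
    apply mono_zero hmm
    rw [Category.assoc, hρm, Preadditive.comp_sub, reassoc_of% ha]; simp
  have hmk : m ≫ k ≫ biprod.fst = 0 := E.comp_zero hm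
  have w : k ≫ biprod.snd = ρ ≫ (m ≫ k ≫ biprod.snd) := by
    rw [reassoc_of% hρm, Preadditive.sub_comp]
    simp [reassoc_of% ha]
  have hpo : IsPushout k ρ biprod.snd (m ≫ k ≫ biprod.snd) := by
    refine mkPO w ?_ ?_
    · intro T u v huv
      have hu : biprod.inl ≫ u = 0 := by
        rw [← ha, Category.assoc, huv, reassoc_of% haρ, zero_comp]
      refine ⟨biprod.inr ≫ u, ?_, ?_⟩
      · ext <;> simp [hu]
      · have : m ≫ k ≫ biprod.snd ≫ biprod.inr = m ≫ k := by
          ext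
          · simp [hmk]
          · simp
        simp only [Category.assoc]
        rw [reassoc_of% this, huv, reassoc_of% hρ]
    · intro T l h1 h2
      exact epi_zero inferInstance h1
  obtain ⟨Q, q, hq⟩ := infl_of_po hpo ⟨_, _, hk⟩
  have hz := E.comp_zero hk
  refine ⟨_, _, conf_of_infl hq g hge (by simp [hz]) ?_ ?_⟩
  · exact (conf_desc hk (biprod.snd ≫ q) (by
      rw [← Category.assoc, w, Category.assoc, E.comp_zero hq, comp_zero])).choose
  · have := (conf_desc hk (biprod.snd ≫ q) (by
      rw [← Category.assoc, w, Category.assoc, E.comp_zero hq, comp_zero])).choose_spec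
    rw [← cancel_epi (biprod.snd : A ⊞ B ⟶ B)]
    simpa using this

/-- A pushout of an inflation gives a conflation. -/
lemma conf_of_po {B C D P Q : 𝒜} {j : B ⟶ C} {e : C ⟶ Q} {f : B ⟶ D} {q : C ⟶ P} {j' : D ⟶ P}
    {e' : P ⟶ Q} (h : E.conflation j e) (h' : E.conflation j' e') (hq : q ≫ e' = e)
    (w : j ≫ q = f ≫ j') :
    E.conflation (biprod.lift j (-f)) (biprod.desc q j') := by
  have hj := conf_mono h
  have hj' := conf_mono h'
  have hpb : IsPullback biprod.fst (biprod.desc q j') e e' := by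
    refine mkPB ?_ ?_ ?_
    · ext
      · simp [hq]
      · simp [E.comp_zero h']
    · intro T a b hab
      obtain ⟨c, hc⟩ := conf_lift h' (b - a ≫ q) (by
        rw [Preadditive.sub_comp, Category.assoc, hq, hab, sub_self])
      refine ⟨biprod.lift a c, by simp, ?_⟩
      rw [biprod.lift_desc, hc]; abel
    · intro T l h1 h2
      have : l ≫ biprod.snd = 0 := by
        apply mono_zero hj'
        rw [biprod.desc_eq, Preadditive.comp_add, reassoc_of% h1] at h2
        simpa using h2
      ext
      · simpa using h1
      · simpa using this
  obtain ⟨K, k, hk⟩ := defl_of_pb hpb ⟨_, _, h⟩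
  have hk0 := E.comp_zero hk
  obtain ⟨b, hb⟩ := conf_lift h (k ≫ biprod.fst) (by
    rw [Category.assoc, hpb.w, reassoc_of% hk0, zero_comp])
  refine conf_of_defl hk _ ?_ ?_ b ?_
  · have : Mono (biprod.lift j (-f) ≫ biprod.fst) := by simpa
    exact mono_of_mono _ biprod.fst
  · rw [biprod.lift_desc, w]; simp
  · ext
    · simp [hb]
    · rw [← cancel_mono j', ← sub_eq_zero]
      rw [biprod.desc_eq, Preadditive.comp_add, ← reassoc_of% hb, w] at hk0
      simp only [biprod.lift_snd, Category.assoc, Preadditive.comp_neg, Preadditive.neg_comp]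
      rw [← neg_eq_zero, ← hk0]; abel

lemma conf_comp_infl (hwic : IsWIC E) {A B C D Q : 𝒜} {i : A ⟶ B} {d : B ⟶ D} {j : B ⟶ C}
    {e : C ⟶ Q} (h1 : E.conflation i d) (h2 : E.conflation j e) :
    ∃ (P : 𝒜) (q : C ⟶ P) (j' : D ⟶ P) (e' : P ⟶ Q), E.conflation (i ≫ j) q ∧
      E.conflation j' e' ∧ d ≫ j' = j ≫ q ∧ q ≫ e' = e := by
  obtain ⟨P, q, j', e', hp, h', hq⟩ := conf_po h2 d
  refine ⟨P, q, j', e', ?_, h', hp.w.symm, hq⟩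
  have h3 := conf_of_po h2 h' hq hp.w
  have h4 := defl_comp (defl_map' (Z' := C) ⟨_, _, h1⟩) ⟨_, _, h3⟩
  have e1 : biprod.map (𝟙 C) d ≫ biprod.desc q j' = biprod.desc (𝟙 C) j ≫ q := by
    ext
    · simp
    · simp [hp.w]
  rw [e1] at h4
  obtain ⟨K, k, hk⟩ := defl_cancel hwic _ _ h4
  have hj' := conf_mono h'
  have hi := conf_mono h1
  have hj := conf_mono h2
  obtain ⟨y, hy⟩ := conf_lift h2 k (by rw [← hq, reassoc_of% (E.comp_zero hk), zero_comp])
  obtain ⟨z, hz⟩ := conf_lift h1 y (by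
    apply mono_zero hj'
    rw [Category.assoc, ← hp.w, reassoc_of% hy, E.comp_zero hk])
  refine conf_of_defl hk _ (mono_comp _ _) ?_ z ?_
  · rw [Category.assoc, hp.w, reassoc_of% (E.comp_zero h1), zero_comp]
  · rw [reassoc_of% hz, hy]

lemma infl_comp (hwic : IsWIC E) {A B D : 𝒜} {f : A ⟶ B} {g : B ⟶ D} (hf : IsInflation E f)
    (hg : IsInflation E g) : IsInflation E (f ≫ g) := by
  obtain ⟨K, k, h⟩ := hf
  obtain ⟨K', k', h'⟩ := hg
  obtain ⟨P, q, _, _, h, _⟩ := conf_comp_infl hwic h h'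
  exact ⟨P, q, h⟩

lemma infl_split (hwic : IsWIC E) {A B : 𝒜} (i : A ⟶ B) (r : B ⟶ A) (h : i ≫ r = 𝟙 A) :
    IsInflation E i := by
  obtain ⟨K, k, hk⟩ := hwic r i h
  obtain ⟨ρ, h1, h2⟩ := retr_of_sec hk i h
  have hm := conf_mono hk
  refine ⟨K, ρ, conf_split hwic i r k ρ h h1 ?_ (by rw [← h2]; abel)⟩
  apply mono_zero hm
  have : ρ ≫ k = 𝟙 B - r ≫ i := by rw [← h2]; abel
  rw [Category.assoc, this, Preadditive.comp_sub, reassoc_of% h]; simp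

lemma infl_cancel (hwic : IsWIC E) {A B D : 𝒜} (i : A ⟶ B) (j : B ⟶ D)
    (h : IsInflation E (i ≫ j)) : IsInflation E i := by
  obtain ⟨Z, e, h⟩ := h
  have him : Mono i := by
    have := conf_mono h
    exact mono_of_mono i j
  obtain ⟨P, q0, j', e', hp, h', hq⟩ := conf_po h (-i)
  have h3 := conf_of_po h h' hq hp.w
  rw [neg_neg] at h3
  have h2 : IsInflation E (biprod.lift (biprod.fst - biprod.snd ≫ j) biprod.snd :
      D ⊞ B ⟶ D ⊞ B) := by
    refine infl_split hwic _ (biprod.lift (biprod.fst + biprod.snd ≫ j) biprod.snd) ?_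
    ext <;> simp
  have h4 := infl_comp hwic ⟨_, _, h3⟩ h2
  have e : biprod.lift (i ≫ j) i ≫ biprod.lift (biprod.fst - biprod.snd ≫ j) biprod.snd
      = i ≫ (biprod.inr : B ⟶ D ⊞ B) := by
    ext <;> simp
  rw [e] at h4
  obtain ⟨Q, q, hq⟩ := h4
  obtain ⟨c, hc⟩ := conf_desc hq biprod.fst (by simp)
  obtain ⟨K, m, hm⟩ := hwic c (biprod.inl ≫ q) (by simp [hc])
  have hmm := conf_mono hm
  obtain ⟨β, hβ⟩ := conf_lift hm (biprod.inr ≫ q) (by simp [hc])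
  have hpb : IsPullback biprod.inr β q m := by
    refine mkPB hβ.symm ?_ ?_
    · intro T a b hab
      have ha : a ≫ biprod.fst = 0 := by
        rw [← hc, reassoc_of% hab, E.comp_zero hm, comp_zero]
      have ha' : a ≫ biprod.snd ≫ biprod.inr = a := by
        ext
        · simp [ha]
        · simp
      refine ⟨a ≫ biprod.snd, by simpa using ha', ?_⟩
      rw [← cancel_mono m, Category.assoc, Category.assoc, hβ, reassoc_of% ha', hab]
    · intro T l h1 h2
      exact mono_zero inferInstance h1
  obtain ⟨K0, k0, hk0⟩ := defl_of_pb hpb ⟨_, _, hq⟩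
  obtain ⟨g, hg⟩ := conf_lift hq (k0 ≫ biprod.inr) (by
    rw [Category.assoc, hpb.w, reassoc_of% (E.comp_zero hk0), zero_comp])
  refine ⟨K, β, conf_of_defl hk0 i him ?_ g ?_⟩
  · apply mono_zero hmm
    have := E.comp_zero hq
    simpa [hβ] using this
  · rw [← cancel_mono (biprod.inr : B ⟶ D ⊞ B)]
    simpa using hg

lemma third (hwic : IsWIC E) {K P B A R Z : 𝒜} {k : K ⟶ P} {p : P ⟶ B} {s : A ⟶ P} {r : P ⟶ R}
    {z : B ⟶ Z} (h : E.conflation k p) (hs : E.conflation s r) (hi : E.conflation (s ≫ p) z) :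
    ∃ w : R ⟶ Z, r ≫ w = p ≫ z ∧ E.conflation (k ≫ r) w := by
  obtain ⟨w, hw⟩ := conf_desc hs (p ≫ z) (by simpa using E.comp_zero hi)
  refine ⟨w, hw, ?_⟩
  have hd : IsDeflation E w := by
    apply defl_cancel hwic r w
    rw [hw]
    exact defl_comp ⟨_, _, h⟩ ⟨_, _, hi⟩
  obtain ⟨T, t, ht⟩ := hd
  have hkm := conf_mono h
  have him := conf_mono hi
  have hkr : Mono (k ≫ r) := by
    apply Preadditive.mono_of_cancel_zero
    intro U u hu
    obtain ⟨a, ha⟩ := conf_lift hs (u ≫ k) (by simpa using hu)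
    have : a = 0 := by
      apply mono_zero him
      rw [reassoc_of% ha, E.comp_zero h, comp_zero]
    apply mono_zero hkm
    rw [← ha, this, zero_comp]
  obtain ⟨T', t', r', a', hpb, ha', hat⟩ := conf_pb hs t
  have hr' := conf_epi ha'
  have hw' := hpb.w
  obtain ⟨b, hb⟩ := conf_lift hi (t' ≫ p) (by
    rw [Category.assoc, ← hw, reassoc_of% hw', E.comp_zero ht, comp_zero])
  obtain ⟨g', hg'⟩ := conf_lift h (t' - b ≫ s) (by
    rw [Preadditive.sub_comp, Category.assoc, hb, sub_self])
  have hgr : g' ≫ k ≫ r = r' ≫ t := by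
    rw [reassoc_of% hg', Preadditive.sub_comp, Category.assoc, E.comp_zero hs, hw']; simp
  obtain ⟨g, hg⟩ := conf_desc ha' g' (by
    apply mono_zero hkr
    rw [Category.assoc, hgr, reassoc_of% (E.comp_zero ha'), zero_comp])
  refine conf_of_defl ht _ hkr ?_ g ?_
  · rw [Category.assoc, hw, reassoc_of% (E.comp_zero h), zero_comp]
  · rw [← cancel_epi r', reassoc_of% hg, hgr]

lemma lift_of_ext (hwic : IsWIC E) {A B Z K M N : 𝒜} (hE : Ext1IsZero E Z K) {i : A ⟶ B}
    {z : B ⟶ Z} {k : K ⟶ M} {p : M ⟶ N} (hi : E.conflation i z) (hp : E.conflation k p)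
    (a : A ⟶ M) (b : B ⟶ N) (w : a ≫ p = i ≫ b) : ∃ s : B ⟶ M, i ≫ s = a ∧ s ≫ p = b := by
  obtain ⟨P, b', p', k', hpb, hk', hkb⟩ := conf_pb hp b
  have hw := hpb.w
  have hs0 : hpb.lift a i w ≫ p' = i := hpb.lift_snd _ _ _
  have hs1 : hpb.lift a i w ≫ b' = a := hpb.lift_fst _ _ _
  generalize hpb.lift a i w = s0 at hs0 hs1
  obtain ⟨R, r, hr⟩ := infl_cancel hwic s0 p' (by rw [hs0]; exact ⟨_, _, hi⟩)
  obtain ⟨v, hv, hc⟩ := third hwic hk' hr (by rw [hs0]; exact hi)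
  obtain ⟨ρ, hρ⟩ := hE _ _ hc
  rw [Category.assoc] at hρ
  obtain ⟨t, ht⟩ := conf_desc hk' (𝟙 P - r ≫ ρ ≫ k') (by
    rw [Preadditive.comp_sub, reassoc_of% hρ]; simp)
  have hpe := conf_epi hk'
  have htp : t ≫ p' = 𝟙 B := by
    rw [← cancel_epi p', reassoc_of% ht, Preadditive.sub_comp]
    simp [E.comp_zero hk']
  have hit : i ≫ t = s0 := by
    rw [← hs0, Category.assoc, ht, Preadditive.comp_sub, reassoc_of% (E.comp_zero hr)]
    simp
  exact ⟨t ≫ b', by rw [reassoc_of% hit, hs1], by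
    rw [Category.assoc, hw, reassoc_of% htp]⟩

lemma conf_id_zero (hwic : IsWIC E) (K : 𝒜) : E.conflation (𝟙 K) (0 : K ⟶ (0 : 𝒜)) :=
  conf_split hwic _ (𝟙 K) 0 _ (by simp) ((isZero_zero 𝒜).eq_of_src _ _) (by simp) (by simp)

lemma ext_extend (hwic : IsWIC E) {A B Z K : 𝒜} (hE : Ext1IsZero E Z K) {i : A ⟶ B}
    {z : B ⟶ Z} (hi : E.conflation i z) (g : A ⟶ K) : ∃ s : B ⟶ K, i ≫ s = g := by
  obtain ⟨s, hs, _⟩ := lift_of_ext hwic hE hi (conf_id_zero hwic K) g 0 (by simp)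
  exact ⟨s, hs⟩

lemma ext_lift (hwic : IsWIC E) {Z K M N : 𝒜} (hE : Ext1IsZero E Z K)
    {k : K ⟶ M} {p : M ⟶ N} (hp : E.conflation k p) (b : Z ⟶ N) : ∃ s : Z ⟶ M, s ≫ p = b := by
  obtain ⟨s, _, hs⟩ := lift_of_ext hwic hE (E.id_deflation Z) hp 0 b (by simp)
  exact ⟨s, hs⟩

end HelpersB

section HelpersC

variable {E : ExactStructure 𝒜}

lemma cp_ext {X Y : Set 𝒜} (hc : IsCotorsionPair E X Y) {A B : 𝒜} (hA : A ∈ X) (hB : B ∈ Y) :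
    Ext1IsZero E A B := (hc.1 A).1 hA B hB

lemma cp_retract_left (hwic : IsWIC E) {X Y : Set 𝒜} (hc : IsCotorsionPair E X Y) {A B : 𝒜}
    (i : A ⟶ B) (r : B ⟶ A) (h : i ≫ r = 𝟙 A) (hB : B ∈ X) : A ∈ X := by
  rw [hc.1]
  intro K hK M k d hd
  obtain ⟨t, ht⟩ := ext_lift hwic (cp_ext hc hB hK) hd r
  obtain ⟨ρ, hρ, _⟩ := retr_of_sec hd (i ≫ t) (by rw [Category.assoc, ht, h])
  exact ⟨ρ, hρ⟩

lemma cp_retract_right (hwic : IsWIC E) {X Y : Set 𝒜} (hc : IsCotorsionPair E X Y) {A B : 𝒜}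
    (i : A ⟶ B) (r : B ⟶ A) (h : i ≫ r = 𝟙 A) (hB : B ∈ Y) : A ∈ Y := by
  rw [hc.2]
  intro Q hQ M k d hd
  obtain ⟨t, ht⟩ := ext_extend hwic (cp_ext hc hQ hB) hd i
  exact ⟨t ≫ r, by rw [reassoc_of% ht, h]⟩

lemma cp_extension_left (hwic : IsWIC E) {X Y : Set 𝒜} (hc : IsCotorsionPair E X Y) {A B Z : 𝒜}
    {i : A ⟶ B} {z : B ⟶ Z} (h : E.conflation i z) (hA : A ∈ X) (hZ : Z ∈ X) : B ∈ X := by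
  rw [hc.1]
  intro K hK M k d hd
  obtain ⟨a, ha⟩ := ext_lift hwic (cp_ext hc hA hK) hd i
  obtain ⟨s, _, hs⟩ := lift_of_ext hwic (cp_ext hc hZ hK) h hd a (𝟙 B) (by simp [ha])
  obtain ⟨ρ, hρ, _⟩ := retr_of_sec hd s hs
  exact ⟨ρ, hρ⟩

lemma cp_biprod_right (hwic : IsWIC E) {X Y : Set 𝒜} (hc : IsCotorsionPair E X Y) {A B : 𝒜}
    (hA : A ∈ Y) (hB : B ∈ Y) : (A ⊞ B) ∈ Y := by
  rw [hc.2]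
  intro Q hQ M k d hd
  obtain ⟨s, hs⟩ := ext_extend hwic (cp_ext hc hQ hA) hd biprod.fst
  obtain ⟨t, ht⟩ := ext_extend hwic (cp_ext hc hQ hB) hd biprod.snd
  refine ⟨biprod.lift s t, ?_⟩
  apply biprod.hom_ext
  · simp [hs]
  · simp [ht]

lemma cp_zero_right {X Y : Set 𝒜} (hc : IsCotorsionPair E X Y) {Z : 𝒜} (hZ : IsZero Z) :
    Z ∈ Y := by
  rw [hc.2]
  intro Q hQ M k d hd
  exact ⟨0, hZ.eq_of_src _ _⟩

lemma cp_zero_left {X Y : Set 𝒜} (hc : IsCotorsionPair E X Y) {Z : 𝒜} (hZ : IsZero Z) :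
    Z ∈ X := by
  rw [hc.1]
  intro K hK M k d hd
  obtain ⟨ρ, hρ, _⟩ := retr_of_sec hd 0 (hZ.eq_of_src _ _)
  exact ⟨ρ, hρ⟩

/-- `g` factors through an object of `ω`. -/
def FacO (ω : Set 𝒜) {Q A : 𝒜} (g : Q ⟶ A) : Prop :=
  ∃ (V : 𝒜) (_ : V ∈ ω) (a : Q ⟶ V) (b : V ⟶ A), a ≫ b = g

lemma FacO.comp {ω : Set 𝒜} {Q A B : 𝒜} {g : Q ⟶ A} (h : FacO ω g) (f : A ⟶ B) :
    FacO ω (g ≫ f) := by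
  obtain ⟨V, hV, a, b, rfl⟩ := h
  exact ⟨V, hV, a, b ≫ f, by simp⟩

lemma FacO.neg {ω : Set 𝒜} {Q A : 𝒜} {g : Q ⟶ A} (h : FacO ω g) : FacO ω (-g) := by
  obtain ⟨V, hV, a, b, rfl⟩ := h
  exact ⟨V, hV, a, -b, by simp⟩

/-- Closure under binary biproducts. -/
def BipClosed (ω : Set 𝒜) : Prop := ∀ A B : 𝒜, A ∈ ω → B ∈ ω → (A ⊞ B) ∈ ω

lemma FacO.add {ω : Set 𝒜} (hω : BipClosed ω) {Q A : 𝒜} {g g' : Q ⟶ A} (h : FacO ω g)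
    (h' : FacO ω g') : FacO ω (g + g') := by
  obtain ⟨V, hV, a, b, rfl⟩ := h
  obtain ⟨V', hV', a', b', rfl⟩ := h'
  exact ⟨V ⊞ V', hω _ _ hV hV', biprod.lift a a', biprod.desc b b', by simp⟩

/-- Stable isomorphisms, tested on objects of `X`. -/
def StW (X ω : Set 𝒜) {A B : 𝒜} (f : A ⟶ B) : Prop :=
  ∀ Q ∈ X, (∀ g : Q ⟶ B, ∃ h : Q ⟶ A, FacO ω (g - h ≫ f)) ∧
    (∀ h : Q ⟶ A, FacO ω (h ≫ f) → FacO ω h)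

lemma StW.comp {X ω : Set 𝒜} (hω : BipClosed ω) {A B D : 𝒜} {f : A ⟶ B} {g : B ⟶ D}
    (hf : StW X ω f) (hg : StW X ω g) : StW X ω (f ≫ g) := by
  intro Q hQ
  refine ⟨fun c => ?_, fun h hh => ?_⟩
  · obtain ⟨b, hb⟩ := (hg Q hQ).1 c
    obtain ⟨a, ha⟩ := (hf Q hQ).1 b
    refine ⟨a, ?_⟩
    have := FacO.add hω hb (ha.comp g)
    have e : c - b ≫ g + (b - a ≫ f) ≫ g = c - a ≫ f ≫ g := by
      simp [Preadditive.sub_comp]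
    rwa [e] at this
  · exact (hf Q hQ).2 _ ((hg Q hQ).2 _ (by simpa using hh))

lemma StW.cancel_left {X ω : Set 𝒜} (hω : BipClosed ω) {A B D : 𝒜} {f : A ⟶ B} {g : B ⟶ D}
    (hf : StW X ω f) (hg : StW X ω (f ≫ g)) : StW X ω g := by
  intro Q hQ
  refine ⟨fun c => ?_, fun b hb => ?_⟩
  · obtain ⟨a, ha⟩ := (hg Q hQ).1 c
    exact ⟨a ≫ f, by simpa using ha⟩
  · obtain ⟨a, ha⟩ := (hf Q hQ).1 b
    have h1 := FacO.add hω hb (ha.comp g).neg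
    have e : b ≫ g + -((b - a ≫ f) ≫ g) = a ≫ f ≫ g := by
      simp [Preadditive.sub_comp]
    rw [e] at h1
    have h2 := FacO.add hω ha (((hg Q hQ).2 a h1).comp f)
    simpa using h2

lemma StW.cancel_right {X ω : Set 𝒜} {A B D : 𝒜} {f : A ⟶ B} {g : B ⟶ D}
    (hf : StW X ω g) (hg : StW X ω (f ≫ g)) : StW X ω f := by
  intro Q hQ
  refine ⟨fun b => ?_, fun a ha => ?_⟩
  · obtain ⟨a, ha⟩ := (hg Q hQ).1 (b ≫ g)
    refine ⟨a, (hf Q hQ).2 _ ?_⟩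
    simpa [Preadditive.sub_comp] using ha
  · exact (hg Q hQ).2 _ (by simpa using ha.comp g)

lemma StW.retract {X ω : Set 𝒜} {A' B' A B : 𝒜} {g : A' ⟶ B'} {f : A ⟶ B}
    (h : IsRetractMor g f) (hf : StW X ω f) : StW X ω g := by
  obtain ⟨φ₁, ψ₁, φ₂, ψ₂, h1, h2, h3, h4⟩ := h
  intro Q hQ
  refine ⟨fun c => ?_, fun a ha => ?_⟩
  · obtain ⟨a, ha⟩ := (hf Q hQ).1 (c ≫ φ₂)
    refine ⟨a ≫ ψ₁, ?_⟩
    have := ha.comp ψ₂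
    simpa [Preadditive.sub_comp, h2, h4] using this
  · have h5 : FacO ω ((a ≫ φ₁) ≫ f) := by
      have := ha.comp φ₂
      simpa [h3] using this
    have := ((hf Q hQ).2 _ h5).comp ψ₁
    simpa [h1] using this

lemma core_embed (hwic : IsWIC E) {X Y : Set 𝒜} (hc : IsCotorsionPair E X Y)
    (hcomp : IsCompleteCP E X Y) {Q : 𝒜} (hQ : Q ∈ X) :
    ∃ (V Q' : 𝒜) (i : Q ⟶ V) (d : V ⟶ Q'), E.conflation i d ∧ Q' ∈ X ∧ V ∈ X ∩ Y := by
  obtain ⟨V, Q', i, d, h, hQ', hV⟩ := (hcomp Q).2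
  exact ⟨V, Q', i, d, h, hQ', cp_extension_left hwic hc h hQ hQ', hV⟩

lemma fac_of_mem (hwic : IsWIC E) {X Y : Set 𝒜} (hc : IsCotorsionPair E X Y)
    (hcomp : IsCompleteCP E X Y) {Q K : 𝒜} (hQ : Q ∈ X) (hK : K ∈ Y) (g : Q ⟶ K) :
    FacO (X ∩ Y) g := by
  obtain ⟨V, Q', i, d, h, hQ', hV⟩ := core_embed hwic hc hcomp hQ
  obtain ⟨s, hs⟩ := ext_extend hwic (cp_ext hc hQ' hK) h g
  exact ⟨V, hV, i, s, hs⟩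

lemma core_bip (hwic : IsWIC E) {X Y : Set 𝒜} (hc : IsCotorsionPair E X Y) :
    BipClosed (X ∩ Y) := fun _ _ hA hB =>
  ⟨cp_extension_left hwic hc (conf_inl hwic _ _) hA.1 hB.1, cp_biprod_right hwic hc hA.2 hB.2⟩

lemma stW_of_tfib (hwic : IsWIC E) {X Y : Set 𝒜} (hc : IsCotorsionPair E X Y)
    (hcomp : IsCompleteCP E X Y) {K M N : 𝒜} {k : K ⟶ M} {p : M ⟶ N} (h : E.conflation k p)
    (hK : K ∈ Y) : StW X (X ∩ Y) p := by
  intro Q hQ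
  refine ⟨fun g => ?_, fun g hg => ?_⟩
  · obtain ⟨s, hs⟩ := ext_lift hwic (cp_ext hc hQ hK) h g
    have h0 := (fac_of_mem hwic hc hcomp hQ (cp_zero_right hc (isZero_zero 𝒜))
      (0 : Q ⟶ (0 : 𝒜))).comp (0 : (0 : 𝒜) ⟶ N)
    refine ⟨s, ?_⟩
    rw [hs, sub_self]
    simpa using h0
  · obtain ⟨V, hV, a, b, hab⟩ := hg
    obtain ⟨b', hb'⟩ := ext_lift hwic (cp_ext hc hV.1 hK) h b
    obtain ⟨c, hcc⟩ := conf_lift h (g - a ≫ b') (by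
      rw [Preadditive.sub_comp, Category.assoc, hb', hab, sub_self])
    have h1 := (fac_of_mem hwic hc hcomp hQ hK c).comp k
    rw [hcc] at h1
    have h2 : FacO (X ∩ Y) (a ≫ b') := ⟨V, hV, a, b', rfl⟩
    have := FacO.add (core_bip hwic hc) h1 h2
    simpa using this

lemma stW_inl {X Y : Set 𝒜} {A V : 𝒜} (hV : V ∈ X ∩ Y) :
    StW X (X ∩ Y) (biprod.inl : A ⟶ A ⊞ V) := by
  intro Q hQ
  refine ⟨fun g => ⟨g ≫ biprod.fst, V, hV, g ≫ biprod.snd, biprod.inr, ?_⟩, fun g hg => ?_⟩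
  · ext <;> simp
  · simpa using hg.comp biprod.fst

/-- A fibration which is a stable isomorphism is a deflation with kernel in `Y`. -/
lemma tfib_of_stW (hwic : IsWIC E) {X Y : Set 𝒜} (hc : IsCotorsionPair E X Y)
    (hcomp : IsCompleteCP E X Y) (hher : IsHereditaryCP E X Y) {Z B : 𝒜} {p : Z ⟶ B}
    (hF : FibO (X ∩ Y) p) (hS : StW X (X ∩ Y) p) :
    ∃ (K : 𝒜) (k : K ⟶ Z), E.conflation k p ∧ K ∈ Y := by
  have hsurj : ∀ Q ∈ X, ∀ g : Q ⟶ B, ∃ h : Q ⟶ Z, h ≫ p = g := by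
    intro Q hQ g
    obtain ⟨h, V, hV, a, b, hab⟩ := (hS Q hQ).1 g
    obtain ⟨b', hb'⟩ := hF V hV b
    exact ⟨h + a ≫ b', by rw [Preadditive.add_comp, Category.assoc, hb', hab]; abel⟩
  obtain ⟨K, k, hk⟩ : IsDeflation E p := by
    obtain ⟨Y₀, X₀, i, d, h, hX, hY⟩ := (hcomp B).1
    obtain ⟨l, hl⟩ := hsurj X₀ hX d
    exact defl_cancel hwic l p (by rw [hl]; exact ⟨_, _, h⟩)
  refine ⟨K, k, hk, ?_⟩
  have hkm := conf_mono hk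
  obtain ⟨Y₀, X₀, i, d, h, hX, hY⟩ := (hcomp K).1
  obtain ⟨V, Q', m, n, hmn, hQ', hV⟩ := core_embed hwic hc hcomp hX
  obtain ⟨V', hV', a, b, hab⟩ := (hS X₀ hX).2 (d ≫ k) ⟨V, hV, 0, 0, by simp [E.comp_zero hk]⟩
  obtain ⟨a', ha'⟩ := ext_extend hwic (cp_ext hc hQ' hV'.2) hmn a
  obtain ⟨c, hcc⟩ := conf_desc hmn (a' ≫ b ≫ p) (by
    rw [reassoc_of% ha', reassoc_of% hab, E.comp_zero hk, comp_zero])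
  obtain ⟨c', hc'⟩ := hsurj Q' hQ' c
  obtain ⟨e, he⟩ := conf_lift hk (a' ≫ b - n ≫ c') (by
    rw [Preadditive.sub_comp, Category.assoc, Category.assoc, hc', hcc, sub_self])
  have hme : m ≫ e = d := by
    rw [← cancel_mono k, Category.assoc, he, Preadditive.comp_sub, reassoc_of% ha', hab,
      reassoc_of% (E.comp_zero hmn)]
    simp
  obtain ⟨P, q, j', e', h1, h2, h3, h4⟩ := conf_comp_infl hwic h hmn
  have hP : P ∈ Y := hher.2 _ _ h1 hY hV.2
  obtain ⟨ρ, hρ⟩ := conf_desc h1 e (by rw [Category.assoc, hme, E.comp_zero h])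
  have hd := conf_epi h
  refine cp_retract_right hwic hc j' ρ ?_ hP
  rw [← cancel_epi d, reassoc_of% h3, hρ, hme]; simp

lemma fibO_desc {ω : Set 𝒜} {A B V : 𝒜} (f : A ⟶ B) {t : V ⟶ B} (ht : IsRightApprox ω t) :
    FibO ω (biprod.desc f t) := by
  intro V' hV' g
  obtain ⟨h, hh⟩ := ht.2 V' hV' g
  exact ⟨h ≫ biprod.inr, by simpa using hh⟩

lemma weqO_iff (hwic : IsWIC E) {X Y : Set 𝒜} (hc : IsCotorsionPair E X Y)
    (hcomp : IsCompleteCP E X Y) (hher : IsHereditaryCP E X Y)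
    (hcf : IsContravariantlyFinite (X ∩ Y)) {A B : 𝒜} (f : A ⟶ B) :
    WeqO E (X ∩ Y) Y f ↔ StW X (X ∩ Y) f := by
  constructor
  · rintro ⟨V, hV, t, K, k, hk, hK⟩
    have := StW.comp (core_bip hwic hc) (stW_inl (A := A) hV) (stW_of_tfib hwic hc hcomp hk hK)
    simpa using this
  · intro hS
    obtain ⟨V, t, ht⟩ := hcf B
    have h1 : StW X (X ∩ Y) (biprod.desc f t) :=
      StW.cancel_left (core_bip hwic hc) (stW_inl (A := A) ht.1) (by simpa using hS)
    obtain ⟨K, k, hk, hK⟩ := tfib_of_stW hwic hc hcomp hher (fibO_desc f ht) h1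
    exact ⟨V, ht.1, t, K, k, hk, hK⟩

lemma cofibO_retract (hwic : IsWIC E) {X Y : Set 𝒜} (hc : IsCotorsionPair E X Y)
    {A' B' A B : 𝒜} (g : A' ⟶ B') (f : A ⟶ B) (h : IsRetractMor g f) (hf : CoFibO E X f) :
    CoFibO E X g := by
  obtain ⟨φ₁, ψ₁, φ₂, ψ₂, h1, h2, h3, h4⟩ := h
  obtain ⟨Z, z, hz, hZ⟩ := hf
  obtain ⟨Z', z', hz'⟩ : IsInflation E g := by
    apply infl_cancel hwic g φ₂
    rw [← h3]
    exact infl_comp hwic (infl_split hwic _ _ h1) ⟨_, _, hz⟩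
  refine ⟨Z', z', hz', ?_⟩
  obtain ⟨a, ha⟩ := conf_desc hz' (φ₂ ≫ z) (by
    rw [← reassoc_of% h3, E.comp_zero hz, comp_zero])
  obtain ⟨b, hb⟩ := conf_desc hz (ψ₂ ≫ z') (by
    rw [reassoc_of% h4, E.comp_zero hz', comp_zero])
  have := conf_epi hz'
  refine cp_retract_left hwic hc a b ?_ hZ
  rw [← cancel_epi z', reassoc_of% ha, hb, reassoc_of% h2]; simp

lemma cofibO_fact (hwic : IsWIC E) {X Y : Set 𝒜} (hc : IsCotorsionPair E X Y)
    (hcomp : IsCompleteCP E X Y) {A B : 𝒜} (f : A ⟶ B) :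
    ∃ (Z : 𝒜) (j : A ⟶ Z) (q : Z ⟶ B) (K : 𝒜) (k : K ⟶ Z), j ≫ q = f ∧ CoFibO E X j ∧
      E.conflation k q ∧ K ∈ Y := by
  obtain ⟨Y₀, X₀, i, d, h, hX, hY⟩ := (hcomp B).1
  obtain ⟨K, k, hk⟩ : IsDeflation E (biprod.desc f d) :=
    defl_cancel hwic biprod.inr _ (by simpa using ⟨_, _, h⟩)
  obtain ⟨Y₁, X₁, m, n, hmn, hX₁, hY₁⟩ := (hcomp K).2
  obtain ⟨N, u, v, w, hpo, hvw, huw⟩ := conf_po hk m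
  obtain ⟨N', u', v', w', hpo', hvw', huw'⟩ := conf_po hmn k
  -- the two pushouts agree up to isomorphism
  let φ := hpo'.flip.isoIsPushout _ _ hpo
  have hu : E.conflation u (φ.inv ≫ w') := by
    refine E.conflation_iso (Iso.refl _) φ (Iso.refl _) hvw' ?_ ?_
    · simp [φ]
    · simp [φ]
  obtain ⟨P, q, j', e', h1, h2, h3, h4⟩ := conf_comp_infl hwic (conf_inl hwic A X₀) hu
  refine ⟨N, biprod.inl ≫ u, w, Y₁, v, by simp [huw], ⟨P, q, h1, ?_⟩, hvw, hY₁⟩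
  exact cp_extension_left hwic hc h2 hX hX₁

lemma cofibrant_cofibO (hwic : IsWIC E) {X Y : Set 𝒜} (hc : IsCotorsionPair E X Y) (A : 𝒜) :
    Cofibrant (CoFibO E X) A ↔ A ∈ X := by
  constructor
  · rintro ⟨Z, d, h, hZ⟩
    obtain ⟨g, hg⟩ := conf_desc h (𝟙 A) (by simp)
    exact cp_retract_left hwic hc d g hg hZ
  · intro h
    exact ⟨A, 𝟙 A, E.id_deflation A, h⟩

lemma fibrant_fibO (ω : Set 𝒜) (A : 𝒜) : Fibrant (FibO ω) A := fun _ _ _ =>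
  ⟨0, (isZero_zero 𝒜).eq_of_tgt _ _⟩

lemma trivial_weqO (hwic : IsWIC E) {X Y : Set 𝒜} (hc : IsCotorsionPair E X Y)
    (hcomp : IsCompleteCP E X Y) (hher : IsHereditaryCP E X Y)
    (hcf : IsContravariantlyFinite (X ∩ Y)) (A : 𝒜) :
    TrivialObj (WeqO E (X ∩ Y) Y) A ↔ A ∈ Y := by
  constructor
  · rintro ⟨V, hV, t, K, k, hk, hK⟩
    refine hher.2 _ _ hk hK (cp_biprod_right hwic hc (cp_zero_right hc (isZero_zero 𝒜)) hV.2)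
  · intro hA
    refine (weqO_iff hwic hc hcomp hher hcf _).2 ?_
    intro Q hQ
    refine ⟨fun g => ⟨0, fac_of_mem hwic hc hcomp hQ hA _⟩, fun h _ =>
      fac_of_mem hwic hc hcomp hQ (cp_zero_right hc (isZero_zero 𝒜)) _⟩

lemma part_one (hwic : IsWIC E) (X Y : Set 𝒜) (hc : IsCotorsionPair E X Y)
    (hcomp : IsCompleteCP E X Y) (hher : IsHereditaryCP E X Y)
    (hcf : IsContravariantlyFinite (X ∩ Y)) :
    IsWeaklyProjModelStr E (CoFibO E X) (FibO (X ∩ Y)) (WeqO E (X ∩ Y) Y) := by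
  have hW : ∀ {A B : 𝒜} (f : A ⟶ B), WeqO E (X ∩ Y) Y f ↔ StW X (X ∩ Y) f :=
    fun f => weqO_iff hwic hc hcomp hher hcf f
  have hb := core_bip hwic hc
  have tf_fib : ∀ {K A B : 𝒜} (k : K ⟶ A) (f : A ⟶ B), E.conflation k f → K ∈ Y →
      FibO (X ∩ Y) f := by
    intro K A B k f h hK V hV g
    exact ext_lift hwic (cp_ext hc hV.1 hK) h g
  have tf_iff : ∀ {A B : 𝒜} (f : A ⟶ B), FibO (X ∩ Y) f ∧ WeqO E (X ∩ Y) Y f ↔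
      ∃ (K : 𝒜) (k : K ⟶ A), E.conflation k f ∧ K ∈ Y := by
    intro A B f
    constructor
    · rintro ⟨h1, h2⟩
      exact tfib_of_stW hwic hc hcomp hher h1 ((hW f).1 h2)
    · rintro ⟨K, k, hk, hK⟩
      exact ⟨tf_fib k f hk hK, (hW f).2 (stW_of_tfib hwic hc hcomp hk hK)⟩
  refine ⟨?_, fibrant_fibO _, ?_, ?_⟩
  · constructor
    · intro A B D f g hf hg
      exact (hW _).2 (StW.comp hb ((hW _).1 hf) ((hW _).1 hg))
    · intro A B D f g hf hg
      exact (hW _).2 (StW.cancel_left hb ((hW _).1 hf) ((hW _).1 hg))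
    · intro A B D f g hf hg
      exact (hW _).2 (StW.cancel_right ((hW _).1 hf) ((hW _).1 hg))
    · intro A' B' A B g f h hf
      exact cofibO_retract hwic hc g f h hf
    · intro A' B' A B g f h hf
      obtain ⟨φ₁, ψ₁, φ₂, ψ₂, h1, h2, h3, h4⟩ := h
      intro V hV c
      obtain ⟨l, hl⟩ := hf V hV (c ≫ φ₂)
      refine ⟨l ≫ ψ₁, ?_⟩
      rw [Category.assoc, ← h4, reassoc_of% hl, h2, Category.comp_id]
    · intro A' B' A B g f h hf
      exact (hW _).2 (StW.retract h ((hW _).1 hf))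
    · intro A B M N i p a b hC hWi hp w
      obtain ⟨Z, z, hz, hZ⟩ := hC
      obtain ⟨V, hV, t, K, k, hk, hK⟩ := hWi
      obtain ⟨s, hs1, hs2⟩ := lift_of_ext hwic (cp_ext hc hZ hK) hz hk biprod.inl (𝟙 B)
        (by simp)
      obtain ⟨l, hl⟩ := hp V hV (t ≫ b)
      refine ⟨s ≫ biprod.desc a l, by rw [reassoc_of% hs1]; simp, ?_⟩
      have e : biprod.desc a l ≫ p = biprod.desc i t ≫ b := by
        ext
        · simp [w]
        · simp [hl]
      rw [Category.assoc, e, reassoc_of% hs2]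
    · intro A B M N i p a b hC hF hWp w
      obtain ⟨Z, z, hz, hZ⟩ := hC
      obtain ⟨K, k, hk, hK⟩ := (tf_iff p).1 ⟨hF, hWp⟩
      exact lift_of_ext hwic (cp_ext hc hZ hK) hz hk a b w
    · intro A B f
      obtain ⟨V, t, ht⟩ := hcf B
      exact ⟨A ⊞ V, biprod.inl, biprod.desc f t, by simp, ⟨V, biprod.snd, conf_inl hwic A V,
        ht.1.1⟩, (hW _).2 (stW_inl ht.1), fibO_desc f ht⟩
    · intro A B f
      obtain ⟨Z, j, q, K, k, h1, h2, h3, h4⟩ := cofibO_fact hwic hc hcomp f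
      have := (tf_iff q).2 ⟨K, k, h3, h4⟩
      exact ⟨Z, j, q, h1, h2, this.1, this.2⟩
  · intro A B f
    simp only [cofibrant_cofibO hwic hc]
    rfl
  · intro A B f
    rw [tf_iff f]
    simp only [fibrant_fibO, true_and, trivial_weqO hwic hc hcomp hher hcf]

end HelpersC

section HelpersD

variable {E : ExactStructure 𝒜}

lemma cp_hereditary_left (hwic : IsWIC E) {X Y : Set 𝒜} (hc : IsCotorsionPair E X Y)
    (hcomp : IsCompleteCP E X Y)
    (hY : ∀ {K A B : 𝒜} (i : K ⟶ A) (d : A ⟶ B), E.conflation i d → K ∈ Y → A ∈ Y → B ∈ Y)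
    {K A B : 𝒜} (κ : K ⟶ A) (δ : A ⟶ B) (h : E.conflation κ δ) (hA : A ∈ X) (hB : B ∈ X) :
    K ∈ X := by
  rw [hc.1]
  intro L hL M ι π hM
  obtain ⟨Y₁, X₁, m, n, hmn, hX₁, hY₁⟩ := (hcomp M).2
  obtain ⟨P, q, j', e', h1, h2, h3, h4⟩ := conf_comp_infl hwic hM hmn
  have hP : P ∈ Y := hY _ _ h1 hL hY₁
  obtain ⟨s, hs⟩ := ext_extend hwic (cp_ext hc hB hP) h j'
  obtain ⟨t, ht⟩ := ext_lift hwic (cp_ext hc hA hL) h1 s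
  obtain ⟨σ, hσ⟩ := conf_lift hmn (κ ≫ t) (by
    rw [← h4, Category.assoc, reassoc_of% ht, reassoc_of% hs, E.comp_zero h2])
  have hj := conf_mono h2
  obtain ⟨ρ, hρ, _⟩ := retr_of_sec hM σ (by
    rw [← cancel_mono j', Category.assoc, h3, reassoc_of% hσ, ht, hs]; simp)
  exact ⟨ρ, hρ⟩

lemma trivial_retract {C F W : MorphismProperty 𝒜} (hM : IsModelStructure C F W) {A B : 𝒜}
    (i : A ⟶ B) (r : B ⟶ A) (h : i ≫ r = 𝟙 A) (hB : TrivialObj W B) : TrivialObj W A :=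
  hM.retract_weq _ _ ⟨𝟙 _, 𝟙 _, i, r, by simp, h, by simp, by simp⟩ hB

lemma cofibrant_retract {C F W : MorphismProperty 𝒜} (hM : IsModelStructure C F W) {A B : 𝒜}
    (i : A ⟶ B) (r : B ⟶ A) (h : i ≫ r = 𝟙 A) (hB : Cofibrant C B) : Cofibrant C A :=
  hM.retract_cofib _ _ ⟨𝟙 _, 𝟙 _, i, r, by simp, h, by simp, by simp⟩ hB

lemma part_two (hwic : IsWIC E) (C F W : MorphismProperty 𝒜)
    (h : IsWeaklyProjModelStr E C F W) :
      IsCotorsionPair E {A : 𝒜 | Cofibrant C A} {A : 𝒜 | Fibrant F A ∧ TrivialObj W A} ∧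
      IsCompleteCP E {A : 𝒜 | Cofibrant C A} {A : 𝒜 | Fibrant F A ∧ TrivialObj W A} ∧
      IsHereditaryCP E {A : 𝒜 | Cofibrant C A} {A : 𝒜 | Fibrant F A ∧ TrivialObj W A} ∧
      IsContravariantlyFinite
        ({A : 𝒜 | Cofibrant C A} ∩ {A : 𝒜 | Fibrant F A ∧ TrivialObj W A}) ∧
      C = CoFibO E {A : 𝒜 | Cofibrant C A} ∧
      F = FibO ({A : 𝒜 | Cofibrant C A} ∩ {A : 𝒜 | Fibrant F A ∧ TrivialObj W A}) ∧
      W = WeqO E ({A : 𝒜 | Cofibrant C A} ∩ {A : 𝒜 | Fibrant F A ∧ TrivialObj W A})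
            {A : 𝒜 | Fibrant F A ∧ TrivialObj W A} := by
  obtain ⟨hM, hfib, hcof, htf⟩ := h
  have z0 : ∀ {A : 𝒜} (f : (0 : 𝒜) ⟶ A), f = 0 := fun f => (isZero_zero 𝒜).eq_of_src _ _
  have z1 : ∀ {A : 𝒜} (f : A ⟶ (0 : 𝒜)), f = 0 := fun f => (isZero_zero 𝒜).eq_of_tgt _ _
  have key1 : ∀ A : 𝒜, ∃ (Y₀ X₀ : 𝒜) (i : Y₀ ⟶ X₀) (d : X₀ ⟶ A), E.conflation i d ∧
      Cofibrant C X₀ ∧ Fibrant F Y₀ ∧ TrivialObj W Y₀ := by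
    intro A
    obtain ⟨Z, j, q, _, hj, hq, hq'⟩ := hM.fact_right (0 : (0 : 𝒜) ⟶ A)
    obtain ⟨K, k, hk, hK⟩ := (htf q).1 ⟨hq, hq'⟩
    rw [z0 j] at hj
    exact ⟨K, Z, k, q, hk, hj, hK⟩
  have key2 : ∀ A : 𝒜, ∃ (Y₁ X₁ : 𝒜) (i : A ⟶ Y₁) (d : Y₁ ⟶ X₁), E.conflation i d ∧
      Cofibrant C X₁ ∧ Fibrant F Y₁ ∧ TrivialObj W Y₁ := by
    intro A
    obtain ⟨Z, j, q, _, hj, hq, hq'⟩ := hM.fact_right (0 : A ⟶ (0 : 𝒜))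
    obtain ⟨K, k, hk, hK, hK'⟩ := (htf q).1 ⟨hq, hq'⟩
    obtain ⟨D, d, hd, hD⟩ := (hcof j).1 hj
    obtain ⟨g, hg⟩ := conf_lift hk (𝟙 Z) (z1 _)
    exact ⟨Z, D, j, d, hd, hD, hfib Z, trivial_retract hM g k hg hK'⟩
  have hcp : IsCotorsionPair E {A : 𝒜 | Cofibrant C A}
      {A : 𝒜 | Fibrant F A ∧ TrivialObj W A} := by
    have hext : ∀ A B : 𝒜, Cofibrant C A → TrivialObj W B → Ext1IsZero E A B := by
      intro A B hA hB M i d hd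
      obtain ⟨hF, hW⟩ := (htf d).2 ⟨_, _, hd, hfib _, hB⟩
      obtain ⟨s, _, hs⟩ := hM.lifting_right (0 : (0 : 𝒜) ⟶ A) d 0 (𝟙 A) hA hF hW (by simp)
      obtain ⟨ρ, hρ, _⟩ := retr_of_sec hd s hs
      exact ⟨ρ, hρ⟩
    refine ⟨fun A => ⟨fun hA B hB => hext A B hA hB.2, fun hA => ?_⟩,
      fun B => ⟨fun hB A hA => hext A B hA hB.2, fun hB => ?_⟩⟩
    · obtain ⟨Y₀, X₀, i, d, hd, hX, hY⟩ := key1 A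
      obtain ⟨r, hr⟩ := hA Y₀ hY i d hd
      obtain ⟨s, hs, _⟩ := sec_of_retr hd r hr
      exact cofibrant_retract hM s d hs hX
    · obtain ⟨Y₁, X₁, i, d, hd, hX, hY⟩ := key2 B
      obtain ⟨r, hr⟩ := hB X₁ hX i d hd
      exact ⟨hfib B, trivial_retract hM i r hr hY.2⟩
  have hcomp : IsCompleteCP E {A : 𝒜 | Cofibrant C A}
      {A : 𝒜 | Fibrant F A ∧ TrivialObj W A} := fun A => ⟨key1 A, key2 A⟩
  have hY : ∀ {K A B : 𝒜} (i : K ⟶ A) (d : A ⟶ B), E.conflation i d →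
      K ∈ {A : 𝒜 | Fibrant F A ∧ TrivialObj W A} → A ∈ {A : 𝒜 | Fibrant F A ∧ TrivialObj W A} →
      B ∈ {A : 𝒜 | Fibrant F A ∧ TrivialObj W A} := by
    intro K A B i d hd hK hA
    refine ⟨hfib B, ?_⟩
    have h1 := ((htf d).2 ⟨_, _, hd, hK⟩).2
    have := hM.weq_comp _ _ hA.2 h1
    rwa [zero_comp] at this
  -- trivial cofibrations between arbitrary objects
  have htc : ∀ {A Z : 𝒜} (i : A ⟶ Z), C i → W i → ∃ (D : 𝒜) (d : Z ⟶ D) (r : Z ⟶ A) (s : D ⟶ Z),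
      E.conflation i d ∧ i ≫ r = 𝟙 A ∧ s ≫ d = 𝟙 D ∧ r ≫ i + d ≫ s = 𝟙 Z ∧ Cofibrant C D ∧
      TrivialObj W D ∧ s ≫ r = 0 := by
    intro A Z i hi hi'
    obtain ⟨D, d, hd, hD⟩ := (hcof i).1 hi
    obtain ⟨r, hr, _⟩ := hM.lifting_left i (0 : A ⟶ (0 : 𝒜)) (𝟙 A) 0 hi hi' (hfib A) (by simp)
    obtain ⟨s, hs, hs', hs''⟩ := sec_of_retr hd r hr
    refine ⟨D, d, r, s, hd, hr, hs, hs', hD, ?_, hs''⟩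
    obtain ⟨D', j, q, _, hj, hj', hq⟩ := hM.fact_left (0 : (0 : 𝒜) ⟶ D)
    rw [z0 j] at hj'
    obtain ⟨l, hl, hl'⟩ := hM.lifting_left i q 0 d hi hi' hq (by simp [E.comp_zero hd])
    obtain ⟨u, hu⟩ := conf_desc hd l hl
    have := conf_epi hd
    refine trivial_retract hM u q ?_ hj'
    rw [← cancel_epi d, reassoc_of% hu, hl']; simp
  have hFle : ∀ {A B : 𝒜} (f : A ⟶ B), F f →
      FibO ({A : 𝒜 | Cofibrant C A} ∩ {A : 𝒜 | Fibrant F A ∧ TrivialObj W A}) f := by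
    intro A B f hf V hV g
    obtain ⟨l, _, hl⟩ := hM.lifting_left (0 : (0 : 𝒜) ⟶ V) f 0 g hV.1 hV.2.2 hf (by simp)
    exact ⟨l, hl⟩
  refine ⟨hcp, hcomp, ⟨fun i d hd hA hB => cp_hereditary_left hwic hcp hcomp hY i d hd hA hB, hY⟩,
    ?_, ?_, ?_, ?_⟩
  · intro B
    obtain ⟨V, j, q, _, hj, hj', hq⟩ := hM.fact_left (0 : (0 : 𝒜) ⟶ B)
    rw [z0 j] at hj hj'
    exact ⟨V, q, ⟨hj, hfib V, hj'⟩, hFle q hq⟩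
  · funext A B f
    exact propext (hcof f)
  · funext A B f
    refine propext ⟨hFle f, fun hf => ?_⟩
    obtain ⟨Z, i, p, hip, hi, hi', hp⟩ := hM.fact_left f
    obtain ⟨D, d, r, s, hd, hr, hs, hrs, hD, hD', _⟩ := htc i hi hi'
    obtain ⟨l, hl⟩ := hf D ⟨hD, hfib D, hD'⟩ (s ≫ p)
    refine hM.retract_fib f p ⟨i, r + d ≫ l, 𝟙 _, 𝟙 _, ?_, by simp, by simp [hip], ?_⟩ hp
    · rw [Preadditive.comp_add, hr, reassoc_of% (E.comp_zero hd)]; simp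
    · rw [Preadditive.add_comp, Category.assoc, hl, ← hip, Category.comp_id]
      have : (r ≫ i + d ≫ s) ≫ p = p := by rw [hrs]; simp
      simpa [Preadditive.add_comp] using this.symm
  · funext A B f
    refine propext ⟨fun hf => ?_, ?_⟩
    · obtain ⟨Z, i, p, hip, hi, hi', hp⟩ := hM.fact_left f
      obtain ⟨D, d, r, s, hd, hr, hs, hrs, hD, hD', hsr⟩ := htc i hi hi'
      have hp' : W p := hM.weq_cancel_left i p hi' (by rw [hip]; exact hf)
      obtain ⟨K, k, hk, hK⟩ := (htf p).1 ⟨hp, hp'⟩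
      refine ⟨D, ⟨hD, hfib D, hD'⟩, s ≫ p, K, k ≫ biprod.lift r d, ?_, hK⟩
      refine E.conflation_iso (Iso.refl _) ⟨biprod.lift r d, biprod.desc i s, ?_, ?_⟩
        (Iso.refl _) hk ?_ ?_
      · rw [biprod.lift_desc, hrs]
      · ext
        · simp [hr]
        · simp [E.comp_zero hd]
        · simp [hsr]
        · simp [hs]
      · simp
      · have : (r ≫ i + d ≫ s) ≫ p = p := by rw [hrs]; simp
        rw [Preadditive.add_comp] at this
        simpa [← hip] using this.symm
    · rintro ⟨V, hV, t, K, k, hk, hK⟩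
      have h1 := ((htf _).2 ⟨_, _, hk, hK⟩).2
      have h2 : W (biprod.inl : A ⟶ A ⊞ V) := by
        obtain ⟨Z, i, p, hip, hi, hi', hp⟩ := hM.fact_left (biprod.inl : A ⟶ A ⊞ V)
        obtain ⟨l, hl⟩ := hFle p hp V hV biprod.inr
        refine hM.retract_weq _ i ⟨𝟙 _, 𝟙 _, biprod.desc i l, p, by simp, ?_, by simp,
          by simp [hip]⟩ hi'
        ext <;> simp [hip, hl]
      have := hM.weq_comp _ _ h2 h1
      simpa using this

end HelpersD

/-- The correspondence of Beligiannis and Reiten: `Φ` and `Ψ` are mutually inverse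
bijections between hereditary complete cotorsion pairs with contravariantly finite
core and weakly projective model structures. -/
theorem stmt_4 (E : ExactStructure 𝒜) (hwic : IsWIC E) :
    (∀ X Y : Set 𝒜, IsCotorsionPair E X Y → IsCompleteCP E X Y →
      IsHereditaryCP E X Y → IsContravariantlyFinite (X ∩ Y) →
      IsWeaklyProjModelStr E (CoFibO E X) (FibO (X ∩ Y)) (WeqO E (X ∩ Y) Y) ∧
      {A : 𝒜 | Cofibrant (CoFibO E X) A} = X ∧
      {A : 𝒜 | Fibrant (FibO (X ∩ Y)) A ∧ TrivialObj (WeqO E (X ∩ Y) Y) A} = Y) ∧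
    (∀ C F W : MorphismProperty 𝒜, IsWeaklyProjModelStr E C F W →
      IsCotorsionPair E {A : 𝒜 | Cofibrant C A} {A : 𝒜 | Fibrant F A ∧ TrivialObj W A} ∧
      IsCompleteCP E {A : 𝒜 | Cofibrant C A} {A : 𝒜 | Fibrant F A ∧ TrivialObj W A} ∧
      IsHereditaryCP E {A : 𝒜 | Cofibrant C A} {A : 𝒜 | Fibrant F A ∧ TrivialObj W A} ∧
      IsContravariantlyFinite
        ({A : 𝒜 | Cofibrant C A} ∩ {A : 𝒜 | Fibrant F A ∧ TrivialObj W A}) ∧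
      C = CoFibO E {A : 𝒜 | Cofibrant C A} ∧
      F = FibO ({A : 𝒜 | Cofibrant C A} ∩ {A : 𝒜 | Fibrant F A ∧ TrivialObj W A}) ∧
      W = WeqO E ({A : 𝒜 | Cofibrant C A} ∩ {A : 𝒜 | Fibrant F A ∧ TrivialObj W A})
            {A : 𝒜 | Fibrant F A ∧ TrivialObj W A}) := by
  refine ⟨fun X Y hc hcomp hher hcf => ⟨part_one hwic X Y hc hcomp hher hcf, ?_, ?_⟩,
    fun C F W h => part_two hwic C F W h⟩
  · ext A
    exact cofibrant_cofibO hwic hc A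
  · ext A
    exact ⟨fun h => (trivial_weqO hwic hc hcomp hher hcf A).1 h.2,
      fun h => ⟨fibrant_fibO _ A, (trivial_weqO hwic hc hcomp hher hcf A).2 h⟩⟩
end

section
/- Let α : A→B and β : B→C be morphisms in an exact category 𝒜. If α is an inflation and βα is a deflation, then β is a deflation and there is an admissible exact sequence 0 → Ker(βα) → Ker β → Coker α → 0 in 𝒜. Dually, if β is a deflation and βα is an inflation, then α is an inflation and there is an admissible exact sequence 0 → Ker β → Coker α → Coker(βα) → 0. -/
open CategoryTheory Limits ZeroObject

universe v u

variable {𝒜 : Type u} [Category.{v} 𝒜] [Preadditive 𝒜] [HasZeroObject 𝒜]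
  [HasBinaryBiproducts 𝒜]

lemma mk_isPullback {P X Y Z : 𝒜} {fst : P ⟶ X} {snd : P ⟶ Y} {f : X ⟶ Z} {g : Y ⟶ Z}
    (w : fst ≫ f = snd ≫ g)
    (hex : ∀ {W : 𝒜} (x : W ⟶ X) (y : W ⟶ Y), x ≫ f = y ≫ g →
      ∃ l : W ⟶ P, l ≫ fst = x ∧ l ≫ snd = y)
    (huniq : ∀ {W : 𝒜} (l : W ⟶ P), l ≫ fst = 0 → l ≫ snd = 0 → l = 0) :
    IsPullback fst snd f g := by
  refine ⟨⟨w⟩, ⟨PullbackCone.IsLimit.mk w (fun s => (hex s.fst s.snd s.condition).choose)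
    (fun s => (hex s.fst s.snd s.condition).choose_spec.1)
    (fun s => (hex s.fst s.snd s.condition).choose_spec.2) ?_⟩⟩
  intro s m h1 h2
  have h := (hex s.fst s.snd s.condition).choose_spec
  rw [← sub_eq_zero]
  apply huniq
  · rw [Preadditive.sub_comp, h1, h.1, sub_self]
  · rw [Preadditive.sub_comp, h2, h.2, sub_self]

lemma mk_isPushout {P X Y Z : 𝒜} {f : Z ⟶ X} {g : Z ⟶ Y} {inl : X ⟶ P} {inr : Y ⟶ P}
    (w : f ≫ inl = g ≫ inr)
    (hex : ∀ {W : 𝒜} (x : X ⟶ W) (y : Y ⟶ W), f ≫ x = g ≫ y →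
      ∃ l : P ⟶ W, inl ≫ l = x ∧ inr ≫ l = y)
    (huniq : ∀ {W : 𝒜} (l : P ⟶ W), inl ≫ l = 0 → inr ≫ l = 0 → l = 0) :
    IsPushout f g inl inr := by
  refine ⟨⟨w⟩, ⟨PushoutCocone.IsColimit.mk w (fun s => (hex s.inl s.inr s.condition).choose)
    (fun s => (hex s.inl s.inr s.condition).choose_spec.1)
    (fun s => (hex s.inl s.inr s.condition).choose_spec.2) ?_⟩⟩
  intro s m h1 h2
  have h := (hex s.inl s.inr s.condition).choose_spec
  rw [← sub_eq_zero]
  apply huniq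
  · rw [Preadditive.comp_sub, h1, h.1, sub_self]
  · rw [Preadditive.comp_sub, h2, h.2, sub_self]

namespace ExactStructure

variable (E : ExactStructure 𝒜)

section
variable {E}

lemma ker_lift {X Y Z W : 𝒜} {i : X ⟶ Y} {d : Y ⟶ Z} (h : E.conflation i d)
    (f : W ⟶ Y) (hf : f ≫ d = 0) : ∃ g : W ⟶ X, g ≫ i = f := by
  obtain ⟨l⟩ := E.isKernel h
  exact ⟨_, (KernelFork.IsLimit.lift' l f hf).2⟩

lemma coker_desc {X Y Z W : 𝒜} {i : X ⟶ Y} {d : Y ⟶ Z} (h : E.conflation i d)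
    (f : Y ⟶ W) (hf : i ≫ f = 0) : ∃ g : Z ⟶ W, d ≫ g = f := by
  obtain ⟨l⟩ := E.isCokernel h
  exact ⟨_, (CokernelCofork.IsColimit.desc' l f hf).2⟩

lemma mono_of {X Y Z : 𝒜} {i : X ⟶ Y} {d : Y ⟶ Z} (h : E.conflation i d) : Mono i := by
  obtain ⟨l⟩ := E.isKernel h
  exact ⟨fun a b hab => Fork.IsLimit.hom_ext l hab⟩

lemma epi_of {X Y Z : 𝒜} {i : X ⟶ Y} {d : Y ⟶ Z} (h : E.conflation i d) : Epi d := by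
  obtain ⟨l⟩ := E.isCokernel h
  exact ⟨fun a b hab => Cofork.IsColimit.hom_ext l hab⟩

lemma conf_of_ker {X X' Y Z : 𝒜} {i : X ⟶ Y} {d : Y ⟶ Z} (h : E.conflation i d)
    (i' : X' ⟶ Y) (hz : i' ≫ d = 0) (hm : Mono i')
    (hl : ∀ {W : 𝒜} (f : W ⟶ Y), f ≫ d = 0 → ∃ g : W ⟶ X', g ≫ i' = f) :
    E.conflation i' d := by
  have := mono_of h
  obtain ⟨a, ha⟩ := ker_lift h i' hz
  obtain ⟨b, hb⟩ := hl i (E.comp_zero h)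
  refine E.conflation_iso (⟨b, a, ?_, ?_⟩ : X ≅ X') (Iso.refl Y) (Iso.refl Z) h ?_ ?_
  · rw [← cancel_mono i]; simp [ha, hb]
  · rw [← cancel_mono i']; simp [ha, hb]
  · simp [hb]
  · simp

lemma conf_of_coker {X Y Z Z' : 𝒜} {i : X ⟶ Y} {d : Y ⟶ Z} (h : E.conflation i d)
    (d' : Y ⟶ Z') (hz : i ≫ d' = 0) (hm : Epi d')
    (hl : ∀ {W : 𝒜} (f : Y ⟶ W), i ≫ f = 0 → ∃ g : Z' ⟶ W, d' ≫ g = f) :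
    E.conflation i d' := by
  have := epi_of h
  obtain ⟨a, ha⟩ := coker_desc h d' hz
  obtain ⟨b, hb⟩ := hl d (E.comp_zero h)
  refine E.conflation_iso (Iso.refl X) (Iso.refl Y) (⟨a, b, ?_, ?_⟩ : Z ≅ Z') h ?_ ?_
  · rw [← cancel_epi d]; simp [reassoc_of% ha, hb]
  · rw [← cancel_epi d']; simp [reassoc_of% hb, ha]
  · simp
  · simp [ha]

lemma defl_of_isPullback {X Y Z Y' Z' : 𝒜} {i : X ⟶ Y} {d : Y ⟶ Z} {f' : Y' ⟶ Y}
    {d' : Y' ⟶ Z'} {f : Z' ⟶ Z} (h : E.conflation i d) (hp : IsPullback f' d' d f) :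
    ∃ (K : 𝒜) (k : K ⟶ Y'), E.conflation k d' := by
  obtain ⟨Y'', f'', d'', K, k, hp', hc⟩ := E.pullback_deflation h f
  refine ⟨K, k ≫ (hp'.isoIsPullback _ _ hp).hom,
    E.conflation_iso (Iso.refl K) (hp'.isoIsPullback _ _ hp) (Iso.refl _) hc ?_ ?_⟩
  · simp
  · simp

lemma conf_of_isPushout {X Y Z X' Y' : 𝒜} {i : X ⟶ Y} {d : Y ⟶ Z} {f : X ⟶ X'}
    {f' : Y ⟶ Y'} {i' : X' ⟶ Y'} {q : Y' ⟶ Z} (h : E.conflation i d)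
    (hp : IsPushout i f f' i') (h1 : f' ≫ q = d) (h2 : i' ≫ q = 0) :
    E.conflation i' q := by
  obtain ⟨Y'', f'', i'', Q, p, hp', hc⟩ := E.pushout_inflation h f
  have hc' : E.conflation i' ((hp'.isoIsPushout _ _ hp).inv ≫ p) :=
    E.conflation_iso (Iso.refl X') (hp'.isoIsPushout _ _ hp) (Iso.refl _) hc (by simp) (by simp)
  have := epi_of h
  refine conf_of_coker hc' q h2 ?_ ?_
  · refine ⟨fun a b hab => ?_⟩
    rw [← cancel_epi d, ← h1, Category.assoc, hab, Category.assoc]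
  · intro W g hg
    obtain ⟨l, hl⟩ := coker_desc h (f' ≫ g) (by
      rw [← Category.assoc, hp.w, Category.assoc, hg, Limits.comp_zero])
    refine ⟨l, hp.hom_ext ?_ ?_⟩
    · rw [← Category.assoc, h1, hl]
    · rw [← Category.assoc, h2, hg, zero_comp]

/-- `X ⟶ X ⟶ 0` is a conflation. -/
lemma id_inflation (X : 𝒜) {Z : 𝒜} (hZ : IsZero Z) : E.conflation (𝟙 X) (0 : X ⟶ Z) := by
  have h : E.conflation (𝟙 X) (0 : X ⟶ (0 : 𝒜)) := by
    refine conf_of_isPushout (E.id_deflation (0 : 𝒜)) (f := (0 : (0 : 𝒜) ⟶ X))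
      (f' := (0 : (0 : 𝒜) ⟶ X)) ?_ ?_ ?_
    · refine mk_isPushout (by simp) (fun x y _ => ⟨y, ?_, by simp⟩) (fun l _ h => by simpa using h)
      exact (isZero_zero 𝒜).eq_of_src _ _
    · exact (isZero_zero 𝒜).eq_of_src _ _
    · simp
  exact E.conflation_iso (Iso.refl X) (Iso.refl X) ((isZero_zero 𝒜).iso hZ) h (by simp) (by simp)

lemma biprod_conf (X Y : 𝒜) : E.conflation (biprod.inl : X ⟶ X ⊞ Y) biprod.snd := by
  refine conf_of_isPushout (E.id_deflation Y) (f := (0 : (0 : 𝒜) ⟶ X))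
    (f' := biprod.inr) ?_ (by simp) (by simp)
  refine mk_isPushout (by simp) (fun x y _ => ⟨biprod.desc y x, by simp, by simp⟩)
    (fun l h1 h2 => ?_)
  ext <;> simp [h1, h2]

/-- Noether isomorphism; in particular inflations compose. -/
lemma noether {A B C D Z : 𝒜} {i : A ⟶ B} {p : B ⟶ D} {j : B ⟶ C} {d : C ⟶ Z}
    (hi : E.conflation i p) (hj : E.conflation j d) :
    ∃ (P : 𝒜) (f : C ⟶ P) (i' : D ⟶ P) (v : P ⟶ Z), E.conflation (i ≫ j) f ∧
      E.conflation i' v ∧ j ≫ f = p ≫ i' ∧ f ≫ v = d := by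
  obtain ⟨P, f, i', _, _, hp, _⟩ := E.pushout_inflation hj p
  have hpj : j ≫ d = p ≫ (0 : D ⟶ Z) := by simp [E.comp_zero hj]
  let v : P ⟶ Z := hp.desc d 0 hpj
  have hv1 : f ≫ v = d := hp.inl_desc _ _ _
  have hv2 : i' ≫ v = 0 := hp.inr_desc _ _ _
  have hiv : E.conflation i' v := conf_of_isPushout hj hp hv1 hv2
  have := mono_of hi
  have := mono_of hj
  have := mono_of hiv
  refine ⟨P, f, i', v, ?_, hiv, hp.w, hv1⟩
  -- the map `C ⊞ D ⟶ P` is a deflation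
  have pb1 : IsPullback (biprod.fst : C ⊞ D ⟶ C) (biprod.desc f i') d v := by
    refine mk_isPullback ?_ ?_ ?_
    · ext <;> simp [hv1, hv2]
    · intro W x y hxy
      obtain ⟨t, ht⟩ := ker_lift hiv (y - x ≫ f) (by simp [hv1, hxy])
      refine ⟨biprod.lift x t, by simp, by simp [ht]⟩
    · intro W l h1 h2
      ext
      · simpa using h1
      · rw [← cancel_mono i']
        have : l = l ≫ biprod.snd ≫ biprod.inr := by
          ext <;> simp [h1]
        rw [this] at h2
        simpa using h2
  obtain ⟨_, _, hd1⟩ := defl_of_isPullback hj pb1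
  have pb2 : IsPullback (biprod.snd : C ⊞ B ⟶ B) (biprod.map (𝟙 C) p) p biprod.snd := by
    refine mk_isPullback (by simp) ?_ ?_
    · intro W x y hxy
      refine ⟨biprod.lift (y ≫ biprod.fst) x, by simp, ?_⟩
      ext <;> simp [hxy]
    · intro W l h1 h2
      ext
      · have := h2 =≫ biprod.fst
        simpa using this
      · simpa using h1
  obtain ⟨_, _, hd2⟩ := defl_of_isPullback hi pb2
  obtain ⟨_, k, hd3⟩ := E.deflation_comp hd2 hd1
  -- up to an automorphism this is `fst ≫ f`
  let e : C ⊞ B ≅ C ⊞ B :=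
    { hom := biprod.lift (biprod.fst + biprod.snd ≫ j) biprod.snd
      inv := biprod.lift (biprod.fst - biprod.snd ≫ j) biprod.snd
      hom_inv_id := by ext <;> simp
      inv_hom_id := by ext <;> simp }
  have hd4 : E.conflation (k ≫ e.hom) (biprod.fst ≫ f : C ⊞ B ⟶ P) := by
    refine E.conflation_iso (Iso.refl _) e (Iso.refl _) hd3 (by simp) ?_
    ext <;> simp [e, hp.w]
  have hijf : (i ≫ j) ≫ f = 0 := by
    rw [Category.assoc, hp.w, ← Category.assoc, E.comp_zero hi, zero_comp]
  have hd5 : E.conflation (biprod.map (i ≫ j) (𝟙 B)) (biprod.fst ≫ f : C ⊞ B ⟶ P) := by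
    refine conf_of_ker hd4 _ ?_ inferInstance ?_
    · rw [biprod.map_fst_assoc, hijf, Limits.comp_zero]
    · intro W g hg
      obtain ⟨y, hy⟩ := ker_lift hj (g ≫ biprod.fst) (by
        rw [← hv1, Category.assoc, ← Category.assoc biprod.fst, ← Category.assoc g, hg, zero_comp])
      obtain ⟨t, ht⟩ := ker_lift hi y (by
        rw [← cancel_mono i', Category.assoc, ← hp.w, ← Category.assoc, hy, Category.assoc, hg,
          zero_comp])
      refine ⟨biprod.lift t (g ≫ biprod.snd), ?_⟩
      ext
      · simp [reassoc_of% ht, hy]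
      · simp
  refine conf_of_isPushout hd5 (f := biprod.fst) (f' := biprod.fst) ?_ rfl hijf
  refine mk_isPushout (by simp) ?_ ?_
  · intro W x y hxy
    refine ⟨biprod.inl ≫ x, ?_, ?_⟩
    · have h2 := biprod.inr ≫= hxy
      ext
      · simp
      · simpa using h2.symm
    · have h1 := biprod.inl ≫= hxy
      simpa using h1
  · intro W l h1 _
    have := biprod.inl ≫= h1
    simpa using this

lemma part_two {A B C : 𝒜} (α : A ⟶ B) (β : B ⟶ C) {K Q : 𝒜} (k : K ⟶ B) (q : C ⟶ Q)
    (hk : E.conflation k β) (hq : E.conflation (α ≫ β) q) :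
    ∃ (Q' : 𝒜) (c : B ⟶ Q') (v : Q' ⟶ Q),
        E.conflation α c ∧ E.conflation (k ≫ c) v ∧ c ≫ v = β ≫ q := by
  obtain ⟨_, _, h⟩ := E.deflation_comp hk hq
  have := mono_of hk
  have := mono_of hq
  have hkz := E.comp_zero hk
  have hqz : α ≫ β ≫ q = 0 := by simpa using E.comp_zero hq
  have h' : E.conflation (biprod.desc α k) (β ≫ q) := by
    refine conf_of_ker h _ ?_ ?_ ?_
    · ext <;> simp [hqz, reassoc_of% hkz]
    · refine Preadditive.mono_of_cancel_zero _ (fun g hg => ?_)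
      have e : g ≫ biprod.desc α k = g ≫ biprod.fst ≫ α + g ≫ biprod.snd ≫ k := by
        rw [biprod.desc_eq, Preadditive.comp_add]
      rw [e] at hg
      have h1 : g ≫ biprod.fst = 0 := by
        rw [← cancel_mono (α ≫ β)]
        have := hg =≫ β
        simpa [hkz] using this
      have h2 : g ≫ biprod.snd = 0 := by
        rw [← cancel_mono k]
        simpa [reassoc_of% h1] using hg
      ext <;> simp [h1, h2]
    · intro W f hf
      obtain ⟨a, ha⟩ := ker_lift hq (f ≫ β) (by simpa using hf)
      obtain ⟨b, hb⟩ := ker_lift hk (f - a ≫ α) (by simp [ha])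
      exact ⟨biprod.lift a b, by simp [hb]⟩
  obtain ⟨P, c, i', v, h1, h2, h3, h4⟩ := noether (biprod_conf A K) h'
  have hki : k ≫ c = i' := by
    have := biprod.inr ≫= h3
    simpa using this
  refine ⟨P, c, v, by simpa using h1, by rwa [hki], h4⟩

end

/-- The opposite exact structure. -/
def opp : ExactStructure 𝒜ᵒᵖ where
  conflation _ _ _ i d := E.conflation d.unop i.unop
  comp_zero h := Quiver.Hom.unop_inj (E.comp_zero h)
  isKernel h := (E.isCokernel h).map fun l => CokernelCofork.IsColimit.ofπOp _ _ l
  isCokernel h := (E.isKernel h).map fun l => KernelFork.IsLimit.ofιOp _ _ l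
  conflation_iso eX eY eZ _ _ h h1 h2 :=
    E.conflation_iso eZ.unop.symm eY.unop.symm eX.unop.symm h
      (by
        apply Quiver.Hom.op_inj
        simp only [Iso.symm_hom, Iso.unop_inv, op_comp, Quiver.Hom.op_unop]
        rw [Iso.inv_comp_eq, ← Category.assoc, ← h2]; simp)
      (by
        apply Quiver.Hom.op_inj
        simp only [Iso.symm_hom, Iso.unop_inv, op_comp, Quiver.Hom.op_unop]
        rw [Iso.inv_comp_eq, ← Category.assoc, ← h1]; simp)
  id_deflation X := id_inflation X.unop (isZero_zero 𝒜ᵒᵖ).unop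
  deflation_comp h h' := by
    obtain ⟨P, f, _, _, hf, _⟩ := noether h' h
    exact ⟨Opposite.op P, f.op, hf⟩
  pullback_deflation h f := by
    obtain ⟨Y', f', i', Q, q, hp, hc⟩ := E.pushout_inflation h f.unop
    exact ⟨Opposite.op Y', f'.op, i'.op, Opposite.op Q, q.op, hp.op.flip, hc⟩
  pushout_inflation h f := by
    obtain ⟨Y', f', i', Q, q, hp, hc⟩ := E.pullback_deflation h f.unop
    exact ⟨Opposite.op Y', f'.op, i'.op, Opposite.op Q, q.op, hp.op.flip, hc⟩

lemma part_one {A B C : 𝒜} (α : A ⟶ B) (β : B ⟶ C) {Q K : 𝒜} (c : B ⟶ Q) (k : K ⟶ A)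
    (hc : E.conflation α c) (hk : E.conflation k (α ≫ β)) :
    ∃ (K' : 𝒜) (k' : K' ⟶ B) (u : K ⟶ K'),
        E.conflation k' β ∧ E.conflation u (k' ≫ c) ∧ u ≫ k' = k ≫ α := by
  obtain ⟨K', k', u, h1, h2, h3⟩ := part_two (E := E.opp) β.op α.op c.op k.op hc hk
  exact ⟨K'.unop, k'.unop, u.unop, h1, h2, Quiver.Hom.op_inj h3⟩

end ExactStructure

/-- If `α` is an inflation and `βα` a deflation then `β` is a deflation with an
admissible exact sequence `0 → Ker βα → Ker β → Coker α → 0`; dually for the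
other composite. -/
theorem stmt_6 (E : ExactStructure 𝒜) {A B C : 𝒜} (α : A ⟶ B) (β : B ⟶ C) :
    (∀ {Q K : 𝒜} (c : B ⟶ Q) (k : K ⟶ A),
      E.conflation α c → E.conflation k (α ≫ β) →
      IsDeflation E β ∧ ∃ (K' : 𝒜) (k' : K' ⟶ B) (u : K ⟶ K'),
        E.conflation k' β ∧ E.conflation u (k' ≫ c) ∧ u ≫ k' = k ≫ α) ∧
    (∀ {K Q : 𝒜} (k : K ⟶ B) (q : C ⟶ Q),
      E.conflation k β → E.conflation (α ≫ β) q →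
      IsInflation E α ∧ ∃ (Q' : 𝒜) (c : B ⟶ Q') (v : Q' ⟶ Q),
        E.conflation α c ∧ E.conflation (k ≫ c) v ∧ c ≫ v = β ≫ q) := by
  refine ⟨?_, ?_⟩
  · intro Q K c k hc hk
    obtain ⟨K', k', u, h1, h2, h3⟩ := E.part_one α β c k hc hk
    exact ⟨⟨K', k', h1⟩, K', k', u, h1, h2, h3⟩
  · intro K Q k q hk hq
    obtain ⟨Q', c, v, h1, h2, h3⟩ := ExactStructure.part_two α β k q hk hq
    exact ⟨⟨Q', c, h1⟩, Q', c, v, h1, h2, h3⟩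
end

section
/- Let 𝒜 be a weakly idempotent complete exact category, 𝒳 and 𝒴 full additive subcategories of 𝒜 closed under isomorphisms and direct summands, and ω = 𝒳∩𝒴. If Ext¹(X,Y) = 0 for all X∈𝒳 and Y∈𝒴, then TCoFib_ω = CoFib_ω ∩ Weq_ω and TFib_ω = Fib_ω ∩ Weq_ω. -/
open CategoryTheory Limits ZeroObject

universe v u

variable {𝒜 : Type u} [Category.{v} 𝒜] [Preadditive 𝒜] [HasZeroObject 𝒜]
  [HasBinaryBiproducts 𝒜]

section Helpers

theorem confl_lift (E : ExactStructure 𝒜) {X Y Z : 𝒜} {i : X ⟶ Y} {d : Y ⟶ Z}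
    (h : E.conflation i d) {T : 𝒜} (a : T ⟶ Y) (ha : a ≫ d = 0) : ∃ b : T ⟶ X, b ≫ i = a := by
  obtain ⟨hl⟩ := E.isKernel h
  obtain ⟨b, hb⟩ := KernelFork.IsLimit.lift' hl a ha
  exact ⟨b, hb⟩

theorem confl_desc (E : ExactStructure 𝒜) {X Y Z : 𝒜} {i : X ⟶ Y} {d : Y ⟶ Z}
    (h : E.conflation i d) {T : 𝒜} (a : Y ⟶ T) (ha : i ≫ a = 0) : ∃ b : Z ⟶ T, d ≫ b = a := by
  obtain ⟨hl⟩ := E.isCokernel h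
  obtain ⟨b, hb⟩ := CokernelCofork.IsColimit.desc' hl a ha
  exact ⟨b, hb⟩

theorem confl_mono (E : ExactStructure 𝒜) {X Y Z : 𝒜} {i : X ⟶ Y} {d : Y ⟶ Z}
    (h : E.conflation i d) : Mono i := by
  obtain ⟨hl⟩ := E.isKernel h
  exact ⟨fun a b hab => Fork.IsLimit.hom_ext hl hab⟩

theorem confl_epi (E : ExactStructure 𝒜) {X Y Z : 𝒜} {i : X ⟶ Y} {d : Y ⟶ Z}
    (h : E.conflation i d) : Epi d := by
  obtain ⟨hl⟩ := E.isCokernel h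
  exact ⟨fun a b hab => Cofork.IsColimit.hom_ext hl hab⟩

theorem pushout_confl (E : ExactStructure 𝒜) {X Y Z X' Y' : 𝒜} {i : X ⟶ Y} {d : Y ⟶ Z}
    (h : E.conflation i d) {g : X ⟶ X'} {g' : Y ⟶ Y'} {i' : X' ⟶ Y'}
    (hp : IsPushout i g g' i') {d' : Y' ⟶ Z} (h0 : i' ≫ d' = 0) (h1 : g' ≫ d' = d) :
    E.conflation i' d' := by
  obtain ⟨Y'', f'', i'', Q, q, hp', hc⟩ := E.pushout_inflation h g
  let e : Y'' ≅ Y' := hp'.isoIsPushout _ _ hp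
  have e1 : f'' ≫ e.hom = g' := hp'.inl_isoIsPushout_hom _ _ hp
  have e2 : i'' ≫ e.hom = i' := hp'.inr_isoIsPushout_hom _ _ hp
  obtain ⟨u, hu⟩ := confl_desc E hc (e.hom ≫ d') (by rw [← Category.assoc, e2, h0])
  obtain ⟨w, hw⟩ := confl_desc E h (f'' ≫ q) (by
    rw [← Category.assoc, hp'.w, Category.assoc, E.comp_zero hc, comp_zero])
  haveI := confl_epi E h
  haveI := confl_epi E hc
  have huw : u ≫ w = 𝟙 Q := by
    rw [← cancel_epi q, ← Category.assoc, hu, Category.comp_id]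
    apply hp'.hom_ext
    · rw [Category.assoc, ← Category.assoc f'', e1, ← Category.assoc, h1, hw]
    · rw [Category.assoc, ← Category.assoc i'', e2, ← Category.assoc, h0, zero_comp,
        E.comp_zero hc]
  have hwu : w ≫ u = 𝟙 Z := by
    rw [← cancel_epi d, ← Category.assoc, hw, Category.comp_id, Category.assoc, hu,
      ← Category.assoc, e1, h1]
  exact E.conflation_iso (Iso.refl X') e ⟨u, w, huw, hwu⟩ hc (by simp [e2]) hu

theorem pullback_confl (E : ExactStructure 𝒜) {X Y Z Z' Y' : 𝒜} {i : X ⟶ Y} {d : Y ⟶ Z}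
    (h : E.conflation i d) {g : Z' ⟶ Z} {g' : Y' ⟶ Y} {d' : Y' ⟶ Z'}
    (hp : IsPullback g' d' d g) {i' : X ⟶ Y'} (h0 : i' ≫ d' = 0) (h1 : i' ≫ g' = i) :
    E.conflation i' d' := by
  obtain ⟨Y'', f'', d'', K, k, hp', hc⟩ := E.pullback_deflation h g
  let e : Y'' ≅ Y' := hp'.isoIsPullback _ _ hp
  have e1 : e.hom ≫ g' = f'' := hp'.isoIsPullback_hom_fst _ _ hp
  have e2 : e.hom ≫ d' = d'' := hp'.isoIsPullback_hom_snd _ _ hp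
  have e1' : e.inv ≫ f'' = g' := by rw [← e1]; simp
  have e2' : e.inv ≫ d'' = d' := by rw [← e2]; simp
  obtain ⟨u, hu⟩ := confl_lift E hc (i' ≫ e.inv) (by rw [Category.assoc, e2', h0])
  obtain ⟨w, hw⟩ := confl_lift E h (k ≫ f'') (by
    rw [Category.assoc, hp'.w, ← Category.assoc, E.comp_zero hc, zero_comp])
  haveI := confl_mono E h
  haveI := confl_mono E hc
  have hwu : w ≫ u = 𝟙 K := by
    rw [← cancel_mono k, Category.assoc, hu, Category.id_comp]
    apply hp'.hom_ext
    · rw [Category.assoc, Category.assoc, e1', h1, hw]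
    · rw [Category.assoc, Category.assoc, e2', h0, comp_zero, E.comp_zero hc]
  have huw : u ≫ w = 𝟙 X := by
    rw [← cancel_mono i, Category.assoc, hw, Category.id_comp, ← Category.assoc, hu,
      Category.assoc, e1', h1]
  refine E.conflation_iso ⟨w, u, hwu, huw⟩ e (Iso.refl Z') hc ?_ (by simp [e2])
  show k ≫ e.hom = w ≫ i'
  rw [← cancel_mono e.inv, Category.assoc, Category.assoc, ← hu, ← Category.assoc w, hwu]
  simp

theorem ext_extend_s8 (E : ExactStructure 𝒜) {K M Z T : 𝒜} {i : K ⟶ M} {d : M ⟶ Z}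
    (h : E.conflation i d) (he : Ext1IsZero E Z T) (g : K ⟶ T) : ∃ r : M ⟶ T, i ≫ r = g := by
  obtain ⟨Y', f', i', Q, q, hp, -⟩ := E.pushout_inflation h g
  have hz : i ≫ d = g ≫ (0 : T ⟶ Z) := by rw [E.comp_zero h, comp_zero]
  have hc := pushout_confl E h hp (d' := hp.desc d 0 hz) (by simp) (by simp)
  obtain ⟨r, hr⟩ := he _ _ hc
  exact ⟨f' ≫ r, by rw [← Category.assoc, hp.w, Category.assoc, hr, Category.comp_id]⟩

theorem ext_section (E : ExactStructure 𝒜) {K M Z : 𝒜} {i : K ⟶ M} {d : M ⟶ Z}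
    (h : E.conflation i d) {r : M ⟶ K} (hr : i ≫ r = 𝟙 K) :
    ∃ s : Z ⟶ M, s ≫ d = 𝟙 Z ∧ s ≫ r = 0 ∧ r ≫ i + d ≫ s = 𝟙 M := by
  obtain ⟨s, hs⟩ := confl_desc E h (𝟙 M - r ≫ i) (by
    rw [Preadditive.comp_sub, ← Category.assoc, hr]; simp)
  haveI := confl_epi E h
  refine ⟨s, ?_, ?_, ?_⟩
  · rw [← cancel_epi d, ← Category.assoc, hs, Preadditive.sub_comp, Category.assoc,
      E.comp_zero h]; simp
  · rw [← cancel_epi d, ← Category.assoc, hs, Preadditive.sub_comp, Category.assoc, hr]; simp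
  · rw [hs]; abel

theorem ext_lift_s8 (E : ExactStructure 𝒜) {K M Z T : 𝒜} {i : K ⟶ M} {d : M ⟶ Z}
    (h : E.conflation i d) (he : Ext1IsZero E T K) (g : T ⟶ Z) : ∃ r : T ⟶ M, r ≫ d = g := by
  obtain ⟨Y', f', d', Q, q, hp, -⟩ := E.pullback_deflation h g
  have hz : i ≫ d = (0 : K ⟶ T) ≫ g := by rw [E.comp_zero h, zero_comp]
  have hc := pullback_confl E h hp (i' := hp.lift i 0 hz) (by simp) (by simp)
  obtain ⟨r, hr⟩ := he _ _ hc
  obtain ⟨s, hs, -, -⟩ := ext_section E hc hr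
  exact ⟨s ≫ f', by rw [Category.assoc, hp.w, ← Category.assoc, hs, Category.id_comp]⟩

/-- A cofibration that is a weak equivalence splits, with cokernel a summand of `W`. -/
theorem tcofib_core (E : ExactStructure 𝒜) {A B Z W K : 𝒜} {f : A ⟶ B} {d : B ⟶ Z}
    (hf : E.conflation f d) {t : W ⟶ B} {k : K ⟶ A ⊞ W}
    (hk : E.conflation k (biprod.desc f t)) (he : Ext1IsZero E Z K) :
    ∃ s : Z ⟶ W, s ≫ t ≫ d = 𝟙 Z := by
  have hfd := E.comp_zero hf
  have hpd : biprod.desc f t ≫ d = biprod.snd ≫ t ≫ d := by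
    apply biprod.hom_ext' <;> simp [hfd]
  have hk0 : (k ≫ biprod.fst) ≫ f + (k ≫ biprod.snd) ≫ t = 0 := by
    rw [← E.comp_zero hk, biprod.desc_eq]; simp
  haveI := confl_mono E hf
  haveI := confl_mono E hk
  obtain ⟨L, l, hl⟩ := E.deflation_comp hk hf
  haveI := confl_mono E hl
  haveI := confl_epi E hl
  obtain ⟨m, hm⟩ := confl_lift E hf (l ≫ biprod.desc f t) (by
    rw [Category.assoc, E.comp_zero hl])
  obtain ⟨g, hg⟩ := confl_lift E hk (l - m ≫ biprod.inl) (by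
    rw [Preadditive.sub_comp, ← hm]; simp)
  obtain ⟨h, hh⟩ := ext_extend_s8 E hl he g
  have hktd : (k ≫ biprod.snd) ≫ t ≫ d = 0 := by
    have := congrArg (· ≫ d) hk0
    simpa [hfd] using this
  obtain ⟨e, hel⟩ := confl_lift E hl ((k ≫ biprod.snd) ≫ biprod.inr) (by
    rw [hpd]; simpa using hktd)
  have hem : e ≫ m = - (k ≫ biprod.fst) := by
    rw [← cancel_mono f, Category.assoc, hm, ← Category.assoc, hel, Preadditive.neg_comp,
      eq_neg_iff_add_eq_zero, add_comm, ← hk0]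
    simp
  have heg : e ≫ g = 𝟙 K := by
    rw [← cancel_mono k, Category.assoc, hg, Preadditive.comp_sub, hel, ← Category.assoc, hem]
    apply biprod.hom_ext <;> simp
  have hr : (k ≫ biprod.snd) ≫ biprod.inr ≫ h = 𝟙 K := by
    rw [← Category.assoc, ← hel, Category.assoc, hh, heg]
  have hls : l ≫ biprod.snd = g ≫ k ≫ biprod.snd := by
    rw [← Category.assoc, hg]; simp
  obtain ⟨s, hs⟩ := confl_desc E hl
    (biprod.snd ≫ (𝟙 W - (biprod.inr ≫ h) ≫ k ≫ biprod.snd)) (by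
      rw [← Category.assoc, hls, Category.assoc, Preadditive.comp_sub, Category.comp_id,
        ← Category.assoc _ _ (k ≫ biprod.snd), hr]; simp)
  refine ⟨s, ?_⟩
  rw [← cancel_epi (biprod.desc f t ≫ d), ← Category.assoc, hs, Category.assoc,
    Preadditive.sub_comp, Category.assoc, hktd, hpd]
  simp

/-- A fibration that is a weak equivalence is a deflation with kernel a summand of `K`. -/
theorem tfib_core (E : ExactStructure 𝒜) (hwic : IsWIC E) {A B W K : 𝒜} {f : A ⟶ B}
    {k : K ⟶ A ⊞ W} (hk : E.conflation k (biprod.fst ≫ f)) :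
    ∃ (K' : 𝒜) (j : K' ⟶ A) (κ : K' ⟶ K) (π : K ⟶ K'),
      E.conflation j f ∧ κ ≫ π = 𝟙 K' := by
  haveI := confl_mono E hk
  obtain ⟨s, hs⟩ := confl_lift E hk (biprod.inr : W ⟶ A ⊞ W) (by simp)
  have hs2 : s ≫ k ≫ biprod.snd = 𝟙 W := by rw [← Category.assoc, hs]; simp
  have hs1 : s ≫ k ≫ biprod.fst = 0 := by rw [← Category.assoc, hs]; simp
  obtain ⟨K', κ, hκ⟩ := hwic (k ≫ biprod.snd) s hs2
  haveI := confl_mono E hκ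
  have hκ0 := E.comp_zero hκ
  obtain ⟨π, hπ⟩ := confl_lift E hκ (𝟙 K - (k ≫ biprod.snd) ≫ s) (by
    rw [Preadditive.sub_comp, Category.assoc, hs2]; simp)
  have hκπ : κ ≫ π = 𝟙 K' := by
    rw [← cancel_mono κ, Category.assoc, hπ, Preadditive.comp_sub, ← Category.assoc κ, hκ0]
    simp
  have hsπ : s ≫ π = 0 := by
    rw [← cancel_mono κ, Category.assoc, hπ, Preadditive.comp_sub, ← Category.assoc s, hs2]
    simp
  have hw : k ≫ biprod.fst = π ≫ κ ≫ k ≫ biprod.fst := by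
    rw [← Category.assoc π, hπ, Preadditive.sub_comp, Category.assoc, hs1]; simp
  have hκk : (κ ≫ k ≫ biprod.fst) ≫ biprod.inl = κ ≫ k := by
    apply biprod.hom_ext
    · simp
    · simpa using hκ0.symm
  have hp : IsPushout k π (biprod.fst : A ⊞ W ⟶ A) (κ ≫ k ≫ biprod.fst) := by
    refine ⟨⟨hw⟩, ⟨PushoutCocone.IsColimit.mk hw
      (fun c => biprod.inl ≫ c.inl) ?_ ?_ ?_⟩⟩
    · intro c
      have hc : (biprod.inr : W ⟶ A ⊞ W) ≫ c.inl = 0 := by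
        rw [← hs, Category.assoc, c.condition, ← Category.assoc, hsπ, zero_comp]
      apply biprod.hom_ext' <;> simp [hc]
    · intro c
      rw [← Category.assoc, hκk, Category.assoc, c.condition, ← Category.assoc, hκπ,
        Category.id_comp]
    · intro c m h1 h2
      rw [← h1]; simp
  refine ⟨K', κ ≫ k ≫ biprod.fst, κ, π, pushout_confl E hk hp ?_ rfl, hκπ⟩
  rw [Category.assoc, Category.assoc, E.comp_zero hk, comp_zero]

end Helpers

/-- If `Ext¹(𝒳,𝒴) = 0` then `TCoFib_ω = CoFib_ω ∩ Weq_ω` and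
`TFib_ω = Fib_ω ∩ Weq_ω`. -/
theorem stmt_8 (E : ExactStructure 𝒜) (hwic : IsWIC E) (X Y : Set 𝒜)
    (hX : AdditivelyClosed X) (hY : AdditivelyClosed Y)
    (hext : ∀ A ∈ X, ∀ B ∈ Y, Ext1IsZero E A B) :
    (∀ {A B : 𝒜} (f : A ⟶ B),
      TCoFibO E (X ∩ Y) f ↔ (CoFibO E X f ∧ WeqO E (X ∩ Y) Y f)) ∧
    (∀ {A B : 𝒜} (f : A ⟶ B),
      TFibO E Y f ↔ (FibO (X ∩ Y) f ∧ WeqO E (X ∩ Y) Y f)) := by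
  constructor
  · intro A B f
    constructor
    · rintro ⟨⟨r, hr⟩, Z, d, hd, hZ⟩
      refine ⟨⟨Z, d, hd, hZ.1⟩, ?_⟩
      obtain ⟨s, hs, hsr, hid⟩ := ext_section E hd hr
      let e : B ≅ A ⊞ Z := ⟨biprod.lift r d, biprod.desc f s, by
        rw [biprod.lift_desc, hid], by
        apply biprod.hom_ext' <;> apply biprod.hom_ext <;>
          simp [hr, hs, hsr, E.comp_zero hd]⟩
      refine ⟨Z, hZ, s, 0, 0, ?_, hY.1⟩
      exact E.conflation_iso (Iso.refl _) e (Iso.refl _) (E.id_deflation B) (by simp)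
        (by rw [Iso.refl_hom, Category.comp_id]; exact e.hom_inv_id.symm)
    · rintro ⟨⟨Z, d, hd, hZ⟩, W, hW, t, K, k, hk, hK⟩
      obtain ⟨s, hs⟩ := tcofib_core E hd hk (hext Z hZ K hK)
      haveI := confl_mono E hd
      have hfd := E.comp_zero hd
      obtain ⟨r, hr⟩ := confl_lift E hd (𝟙 B - d ≫ s ≫ t) (by
        simp [Preadditive.sub_comp, hs])
      refine ⟨⟨r, ?_⟩, Z, d, hd, hZ, hY.2.2.2 s (t ≫ d) hs hW.2⟩
      rw [← cancel_mono f, Category.assoc, hr, Preadditive.comp_sub, ← Category.assoc f d, hfd]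
      simp
  · intro A B f
    constructor
    · rintro ⟨K, k, hk, hK⟩
      refine ⟨fun W hW g => ext_lift_s8 E hk (hext W hW.1 K hK) g, ?_⟩
      refine ⟨0, ⟨hX.1, hY.1⟩, 0, K, k ≫ biprod.inl, ?_, hK⟩
      let e : A ≅ A ⊞ (0 : 𝒜) := ⟨biprod.inl, biprod.fst, by simp, by
        apply biprod.hom_ext'
        · simp
        · exact (isZero_zero 𝒜).eq_of_src _ _⟩
      exact E.conflation_iso (Iso.refl _) e (Iso.refl _) hk (by simp [e]) (by simp [e])
    · rintro ⟨hf, W, hW, t, K, k, hk, hK⟩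
      obtain ⟨h, hh⟩ := hf W hW t
      let e : A ⊞ W ≅ A ⊞ W :=
        ⟨biprod.desc biprod.inl (h ≫ biprod.inl + biprod.inr),
          biprod.desc biprod.inl (biprod.inr - h ≫ biprod.inl), by
          apply biprod.hom_ext' <;> apply biprod.hom_ext <;> simp, by
          apply biprod.hom_ext' <;> apply biprod.hom_ext <;> simp⟩
      have hk' : E.conflation (k ≫ e.hom) (biprod.fst ≫ f) :=
        E.conflation_iso (Iso.refl _) e (Iso.refl _) hk (by simp) (by
          apply biprod.hom_ext' <;> simp [e, hh])
      obtain ⟨K', j, κ, π, hj, hκ⟩ := tfib_core E hwic hk'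
      exact ⟨K', j, hj, hY.2.2.2 κ π hκ hK⟩
end

section
/- Let 𝒜 be a weakly idempotent complete exact category and (𝒳,𝒴) a hereditary complete cotorsion pair in 𝒜 with ω = 𝒳∩𝒴 contravariantly finite in 𝒜. Let α : A→B and β : B→C be morphisms in 𝒜. If two of the three morphisms α, β, βα belong to Weq_ω, then so does the third. -/
open CategoryTheory Limits ZeroObject

universe v u

variable {𝒜 : Type u} [Category.{v} 𝒜] [Preadditive 𝒜] [HasZeroObject 𝒜]
  [HasBinaryBiproducts 𝒜]

namespace WeqAux

theorem mono_of (E : ExactStructure 𝒜) {X Y Z : 𝒜} {i : X ⟶ Y} {d : Y ⟶ Z}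
    (h : E.conflation i d) : Mono i := by
  obtain ⟨hk⟩ := E.isKernel h
  exact ⟨fun a b hab => Fork.IsLimit.hom_ext hk (by simpa using hab)⟩

theorem epi_of (E : ExactStructure 𝒜) {X Y Z : 𝒜} {i : X ⟶ Y} {d : Y ⟶ Z}
    (h : E.conflation i d) : Epi d := by
  obtain ⟨hk⟩ := E.isCokernel h
  exact ⟨fun a b hab => Cofork.IsColimit.hom_ext hk (by simpa using hab)⟩

theorem klift (E : ExactStructure 𝒜) {X Y Z T : 𝒜} {i : X ⟶ Y} {d : Y ⟶ Z}
    (h : E.conflation i d) (g : T ⟶ Y) (hg : g ≫ d = 0) : ∃ l : T ⟶ X, l ≫ i = g := by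
  obtain ⟨hk⟩ := E.isKernel h
  obtain ⟨l, hl⟩ := KernelFork.IsLimit.lift' hk g hg
  exact ⟨l, by simpa using hl⟩

theorem cdesc (E : ExactStructure 𝒜) {X Y Z T : 𝒜} {i : X ⟶ Y} {d : Y ⟶ Z}
    (h : E.conflation i d) (g : Y ⟶ T) (hg : i ≫ g = 0) : ∃ l : Z ⟶ T, d ≫ l = g := by
  obtain ⟨hk⟩ := E.isCokernel h
  obtain ⟨l, hl⟩ := CokernelCofork.IsColimit.desc' hk g hg
  exact ⟨l, by simpa using hl⟩

theorem conf_of_ker (E : ExactStructure 𝒜) {X X' Y Z : 𝒜} {i : X ⟶ Y} {d : Y ⟶ Z}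
    (h : E.conflation i d) (j : X' ⟶ Y) [Mono j] (hj : j ≫ d = 0)
    (hl : ∃ l : X ⟶ X', l ≫ j = i) : E.conflation j d := by
  have := mono_of E h
  obtain ⟨l, hl⟩ := hl
  obtain ⟨m, hm⟩ := klift E h j hj
  let e : X ≅ X' := ⟨l, m, by rw [← cancel_mono i]; simp [hm, hl],
    by rw [← cancel_mono j]; simp [hm, hl]⟩
  exact E.conflation_iso e (Iso.refl _) (Iso.refl _) h (by simp [e, hl]) (by simp)

theorem conf_of_coker (E : ExactStructure 𝒜) {X Y Z Z' : 𝒜} {i : X ⟶ Y} {d : Y ⟶ Z}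
    (h : E.conflation i d) (j : Y ⟶ Z') [Epi j] (hj : i ≫ j = 0)
    (hl : ∃ l : Z' ⟶ Z, j ≫ l = d) : E.conflation i j := by
  have := epi_of E h
  obtain ⟨l, hl⟩ := hl
  obtain ⟨m, hm⟩ := cdesc E h j hj
  let e : Z ≅ Z' := ⟨m, l, by rw [← cancel_epi d]; simp [← Category.assoc, hm, hl],
    by rw [← cancel_epi j]; simp [← Category.assoc, hm, hl]⟩
  exact E.conflation_iso (Iso.refl _) (Iso.refl _) e h (by simp) (by simp [e, hm])

theorem pull (E : ExactStructure 𝒜) {X Y Z Z' : 𝒜} {i : X ⟶ Y} {d : Y ⟶ Z}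
    (h : E.conflation i d) (f : Z' ⟶ Z) :
    ∃ (Y' : 𝒜) (f' : Y' ⟶ Y) (d' : Y' ⟶ Z') (k : X ⟶ Y'),
      IsPullback f' d' d f ∧ E.conflation k d' ∧ k ≫ f' = i := by
  obtain ⟨Y', f', d', K, k, hp, hc⟩ := E.pullback_deflation h f
  have := mono_of E h
  have hz : i ≫ d = (0 : X ⟶ Z') ≫ f := by simp [E.comp_zero h]
  have h1 : hp.lift i 0 hz ≫ f' = i := hp.lift_fst _ _ _
  have h2 : hp.lift i 0 hz ≫ d' = 0 := hp.lift_snd _ _ _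
  have hm : Mono (hp.lift i 0 hz) := by
    have : Mono (hp.lift i 0 hz ≫ f') := by rw [h1]; infer_instance
    exact mono_of_mono _ f'
  refine ⟨Y', f', d', hp.lift i 0 hz, hp, conf_of_ker E hc _ h2 ?_, h1⟩
  obtain ⟨l, hl⟩ := klift E h (k ≫ f') (by
    rw [Category.assoc, hp.w, ← Category.assoc, E.comp_zero hc, zero_comp])
  refine ⟨l, hp.hom_ext ?_ ?_⟩
  · rw [Category.assoc, h1, hl]
  · rw [Category.assoc, h2, comp_zero, E.comp_zero hc]

theorem push (E : ExactStructure 𝒜) {X Y Z X' : 𝒜} {i : X ⟶ Y} {d : Y ⟶ Z}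
    (h : E.conflation i d) (f : X ⟶ X') :
    ∃ (Y' : 𝒜) (f' : Y ⟶ Y') (i' : X' ⟶ Y') (q : Y' ⟶ Z),
      IsPushout i f f' i' ∧ E.conflation i' q ∧ f' ≫ q = d := by
  obtain ⟨Y', f', i', Q, k, hp, hc⟩ := E.pushout_inflation h f
  have := epi_of E h
  have hz : i ≫ d = f ≫ (0 : X' ⟶ Z) := by simp [E.comp_zero h]
  have h1 : f' ≫ hp.desc d 0 hz = d := hp.inl_desc _ _ _
  have h2 : i' ≫ hp.desc d 0 hz = 0 := hp.inr_desc _ _ _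
  have hm : Epi (hp.desc d 0 hz) := by
    have : Epi (f' ≫ hp.desc d 0 hz) := by rw [h1]; infer_instance
    exact epi_of_epi f' _
  refine ⟨Y', f', i', hp.desc d 0 hz, hp, conf_of_coker E hc _ h2 ?_, h1⟩
  obtain ⟨l, hl⟩ := cdesc E h (f' ≫ k) (by
    rw [← Category.assoc, hp.w, Category.assoc, E.comp_zero hc, comp_zero])
  refine ⟨l, hp.hom_ext ?_ ?_⟩
  · rw [← Category.assoc, h1, hl]
  · rw [← Category.assoc, h2, zero_comp, E.comp_zero hc]

theorem comp_ker (E : ExactStructure 𝒜) {K M Z X V : 𝒜} {i : K ⟶ M} {d : M ⟶ Z}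
    {j : X ⟶ Z} {e : Z ⟶ V} (h : E.conflation i d) (h' : E.conflation j e) :
    ∃ (N : 𝒜) (n : N ⟶ M) (m : N ⟶ X) (k : K ⟶ N),
      E.conflation k m ∧ E.conflation n (d ≫ e) ∧ n ≫ d = m ≫ j ∧ k ≫ n = i := by
  obtain ⟨N, n, m, k, hp, hc, hk⟩ := pull E h j
  obtain ⟨K0, k0, h0⟩ := E.deflation_comp h h'
  have := mono_of E h'
  have hm : Mono n := ⟨fun x y hxy => hp.hom_ext hxy (by
    rw [← cancel_mono j, Category.assoc, Category.assoc, ← hp.w, ← Category.assoc, hxy,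
      Category.assoc])⟩
  refine ⟨N, n, m, k, hc, conf_of_ker E h0 n ?_ ?_, hp.w, hk⟩
  · rw [← Category.assoc, hp.w, Category.assoc, E.comp_zero h', comp_zero]
  · obtain ⟨l, hl⟩ := klift E h' (k0 ≫ d) (by rw [Category.assoc, E.comp_zero h0])
    exact ⟨hp.lift k0 l hl.symm, hp.lift_fst _ _ _⟩

/-- A section of the deflation gives a retraction of the inflation. -/
theorem retr_of_sec (E : ExactStructure 𝒜) {X Y Z : 𝒜} {i : X ⟶ Y} {d : Y ⟶ Z}
    (h : E.conflation i d) (s : Z ⟶ Y) (hs : s ≫ d = 𝟙 Z) :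
    ∃ r : Y ⟶ X, i ≫ r = 𝟙 X ∧ s ≫ r = 0 ∧ r ≫ i + d ≫ s = 𝟙 Y := by
  have := mono_of E h
  obtain ⟨r, hr⟩ := klift E h (𝟙 Y - d ≫ s) (by simp [hs])
  refine ⟨r, ?_, ?_, ?_⟩
  · rw [← cancel_mono i, Category.assoc, hr, Preadditive.comp_sub, ← Category.assoc,
      E.comp_zero h]; simp
  · rw [← cancel_mono i, Category.assoc, hr, Preadditive.comp_sub, ← Category.assoc, hs]; simp
  · rw [hr]; simp

theorem sec_of_retr (E : ExactStructure 𝒜) {X Y Z : 𝒜} {i : X ⟶ Y} {d : Y ⟶ Z}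
    (h : E.conflation i d) (r : Y ⟶ X) (hr : i ≫ r = 𝟙 X) :
    ∃ s : Z ⟶ Y, s ≫ d = 𝟙 Z := by
  have := epi_of E h
  obtain ⟨s, hs⟩ := cdesc E h (𝟙 Y - r ≫ i) (by
    rw [Preadditive.comp_sub, ← Category.assoc, hr]; simp)
  refine ⟨s, ?_⟩
  rw [← cancel_epi d, ← Category.assoc, hs, Preadditive.sub_comp, Category.assoc,
      E.comp_zero h]; simp

/-- `(d, f)` is a deflation if `d` is. -/
theorem defl_desc (E : ExactStructure 𝒜) (hwic : IsWIC E) {A B C : 𝒜} {d : A ⟶ C}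
    (h : IsDeflation E d) (f : B ⟶ C) : IsDeflation E (biprod.desc d f) := by
  obtain ⟨K, i, h⟩ := h
  obtain ⟨P, p, q, k, hp, hc, -⟩ := pull E h (biprod.fst : C ⊞ B ⟶ C)
  obtain ⟨K', k', hk'⟩ := hwic (biprod.desc (𝟙 C) f) biprod.inl (by simp)
  obtain ⟨K₂, k₂, hk₂⟩ := E.deflation_comp hc hk'
  have hw : biprod.fst ≫ d = biprod.map d (𝟙 B) ≫ biprod.fst := by simp
  let e : P ≅ A ⊞ B :=
    { hom := biprod.lift p (q ≫ biprod.snd)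
      inv := hp.lift biprod.fst (biprod.map d (𝟙 B)) hw
      hom_inv_id := by
        apply hp.hom_ext
        · simp
        · rw [Category.assoc, hp.lift_snd]
          apply biprod.hom_ext
          · simp [hp.w]
          · simp
      inv_hom_id := by
        apply biprod.hom_ext
        · simp
        · rw [Category.assoc, biprod.lift_snd, ← Category.assoc, hp.lift_snd]; simp }
  have he : e.inv ≫ q = biprod.map d (𝟙 B) := hp.lift_snd _ _ _
  clear_value e
  refine ⟨K₂, k₂ ≫ e.hom, E.conflation_iso (Iso.refl _) e (Iso.refl _) hk₂ (by simp) ?_⟩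
  rw [← cancel_epi e.inv]
  simp only [Iso.refl_hom, Category.comp_id, Iso.inv_hom_id_assoc]
  rw [← Category.assoc, he]
  apply biprod.hom_ext' <;> simp

theorem defl_zero (E : ExactStructure 𝒜) (hwic : IsWIC E) {A B C : 𝒜} (f : B ⟶ C)
    (h : IsDeflation E (biprod.desc (0 : A ⟶ C) f)) : IsDeflation E f := by
  obtain ⟨N, n, h⟩ := h
  obtain ⟨s, hs⟩ := klift E h (biprod.inl : A ⟶ A ⊞ B) (by simp)
  have hsp : s ≫ n ≫ biprod.fst = 𝟙 A := by rw [← Category.assoc, hs]; simp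
  obtain ⟨K, k, hk⟩ := hwic (n ≫ biprod.fst) s hsp
  obtain ⟨r, hkr, hsr, hid⟩ := retr_of_sec E hk s hsp
  obtain ⟨Y', f', i', q, hp, hc, hq⟩ := push E h r
  have hw : n ≫ biprod.snd = r ≫ k ≫ n ≫ biprod.snd := by
    have := congrArg (fun z => z ≫ n ≫ biprod.snd) hid
    simp only [Preadditive.add_comp, Category.assoc, Category.id_comp] at this
    rw [reassoc_of% hs] at this
    simpa using this.symm
  have hinl : biprod.inl ≫ f' = 0 := by
    rw [← hs, Category.assoc, hp.w, ← Category.assoc, hsr, zero_comp]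
  have hsnd : (biprod.snd : A ⊞ B ⟶ B) ≫ biprod.inr ≫ f' = f' := by
    apply biprod.hom_ext'
    · simp [hinl]
    · simp
  let e : Y' ≅ B :=
    { hom := hp.desc biprod.snd (k ≫ n ≫ biprod.snd) hw
      inv := biprod.inr ≫ f'
      hom_inv_id := by
        apply hp.hom_ext
        · rw [← Category.assoc, hp.inl_desc, hsnd, Category.comp_id]
        · rw [← Category.assoc, hp.inr_desc, Category.assoc, Category.assoc, hsnd, hp.w,
            ← Category.assoc, hkr]; simp
      inv_hom_id := by
        rw [Category.assoc, hp.inl_desc]; simp }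
  have he : e.inv = biprod.inr ≫ f' := rfl
  clear_value e
  refine ⟨K, i' ≫ e.hom, E.conflation_iso (Iso.refl _) e (Iso.refl _) hc (by simp) ?_⟩
  rw [← cancel_epi e.inv]
  simp only [Iso.refl_hom, Category.comp_id, Iso.inv_hom_id_assoc]
  rw [he, Category.assoc, hq]; simp

theorem defl_cancel (E : ExactStructure 𝒜) (hwic : IsWIC E) {A B C : 𝒜} (g : A ⟶ B) (f : B ⟶ C)
    (h : IsDeflation E (g ≫ f)) : IsDeflation E f := by
  apply defl_zero E hwic (A := A)
  obtain ⟨K, k, hk⟩ := defl_desc E hwic h f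
  let e : A ⊞ B ≅ A ⊞ B :=
    { hom := biprod.desc (biprod.inl + g ≫ biprod.inr) biprod.inr
      inv := biprod.desc (biprod.inl - g ≫ biprod.inr) biprod.inr
      hom_inv_id := by apply biprod.hom_ext' <;> simp
      inv_hom_id := by apply biprod.hom_ext' <;> simp }
  refine ⟨K, k ≫ e.hom, E.conflation_iso (Iso.refl _) e (Iso.refl _) hk (by simp) ?_⟩
  apply biprod.hom_ext' <;> simp [e]

section cp
variable {E : ExactStructure 𝒜} {X Y : Set 𝒜}

theorem ext_along (hcp : IsCotorsionPair E X Y) {M N Z K : 𝒜} {i : M ⟶ N} {d : N ⟶ Z}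
    (h : E.conflation i d) (hZ : Z ∈ X) (hK : K ∈ Y) (g : M ⟶ K) : ∃ l : N ⟶ K, i ≫ l = g := by
  obtain ⟨P, f', i', q, hp, hc, -⟩ := push E h g
  obtain ⟨r, hr⟩ := (hcp.1 Z).1 hZ K hK i' q hc
  exact ⟨f' ≫ r, by rw [← Category.assoc, hp.w, Category.assoc, hr, Category.comp_id]⟩

theorem lift_along (hcp : IsCotorsionPair E X Y) {K M Z T : 𝒜} {i : K ⟶ M} {d : M ⟶ Z}
    (h : E.conflation i d) (hT : T ∈ X) (hK : K ∈ Y) (g : T ⟶ Z) : ∃ l : T ⟶ M, l ≫ d = g := by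
  obtain ⟨P, f', d', k, hp, hc, -⟩ := pull E h g
  obtain ⟨r, hr⟩ := (hcp.1 T).1 hT K hK k d' hc
  obtain ⟨s, hs⟩ := sec_of_retr E hc r hr
  exact ⟨s ≫ f', by rw [Category.assoc, hp.w, ← Category.assoc, hs, Category.id_comp]⟩

theorem Y_retract (hcp : IsCotorsionPair E X Y) {K Z : 𝒜} (i : K ⟶ Z) (r : Z ⟶ K)
    (h : i ≫ r = 𝟙 K) (hZ : Z ∈ Y) : K ∈ Y := by
  rw [hcp.2]
  intro T hT M j d hc
  obtain ⟨l, hl⟩ := ext_along hcp hc hT hZ i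
  exact ⟨l ≫ r, by rw [← Category.assoc, hl, h]⟩

theorem Y_sum (hcp : IsCotorsionPair E X Y) {K Z : 𝒜} (hK : K ∈ Y) (hZ : Z ∈ Y) :
    (K ⊞ Z) ∈ Y := by
  rw [hcp.2]
  intro T hT M j d hc
  obtain ⟨l, hl⟩ := ext_along hcp hc hT hK biprod.fst
  obtain ⟨l', hl'⟩ := ext_along hcp hc hT hZ biprod.snd
  exact ⟨biprod.lift l l', by apply biprod.hom_ext <;> simp [hl, hl']⟩

theorem X_sum (hcp : IsCotorsionPair E X Y) {K Z : 𝒜} (hK : K ∈ X) (hZ : Z ∈ X) :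
    (K ⊞ Z) ∈ X := by
  rw [hcp.1]
  intro T hT M j d hc
  obtain ⟨l, hl⟩ := lift_along hcp hc hK hT biprod.inl
  obtain ⟨l', hl'⟩ := lift_along hcp hc hZ hT biprod.inr
  obtain ⟨r, hr, -⟩ := retr_of_sec E hc (biprod.desc l l')
    (by apply biprod.hom_ext' <;> simp [hl, hl'])
  exact ⟨r, hr⟩

theorem X_ext (hcp : IsCotorsionPair E X Y) {A B C : 𝒜} {i : A ⟶ B} {d : B ⟶ C}
    (h : E.conflation i d) (hA : A ∈ X) (hC : C ∈ X) : B ∈ X := by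
  rw [hcp.1]
  intro K hK M j p hc
  obtain ⟨N, n, m, k, h1, h2, -, h4⟩ := comp_ker E hc h
  obtain ⟨r, hr⟩ := (hcp.1 A).1 hA K hK k m h1
  obtain ⟨l, hl⟩ := ext_along hcp h2 hC hK r
  exact ⟨l, by rw [← h4, Category.assoc, hl, hr]⟩

/-- Morphisms factoring through an object of `ω`. -/
def Fac (ω : Set 𝒜) {A B : 𝒜} (g : A ⟶ B) : Prop :=
  ∃ (W : 𝒜) (_ : W ∈ ω) (a : A ⟶ W) (b : W ⟶ B), a ≫ b = g

theorem Fac.pre {ω : Set 𝒜} {A B C : 𝒜} {g : A ⟶ B} (h : Fac ω g) (f : C ⟶ A) :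
    Fac ω (f ≫ g) := by
  obtain ⟨W, hW, a, b, rfl⟩ := h
  exact ⟨W, hW, f ≫ a, b, by simp⟩

theorem Fac.post {ω : Set 𝒜} {A B C : 𝒜} {g : A ⟶ B} (h : Fac ω g) (f : B ⟶ C) :
    Fac ω (g ≫ f) := by
  obtain ⟨W, hW, a, b, rfl⟩ := h
  exact ⟨W, hW, a, b ≫ f, by simp⟩

theorem Fac.neg {ω : Set 𝒜} {A B : 𝒜} {g : A ⟶ B} (h : Fac ω g) : Fac ω (-g) := by
  obtain ⟨W, hW, a, b, rfl⟩ := h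
  exact ⟨W, hW, -a, b, by simp⟩

theorem Fac.add (hcp : IsCotorsionPair E X Y) {A B : 𝒜} {g g' : A ⟶ B}
    (h : Fac (X ∩ Y) g) (h' : Fac (X ∩ Y) g') : Fac (X ∩ Y) (g + g') := by
  obtain ⟨W, hW, a, b, rfl⟩ := h
  obtain ⟨W', hW', a', b', rfl⟩ := h'
  exact ⟨W ⊞ W', ⟨X_sum hcp hW.1 hW'.1, Y_sum hcp hW.2 hW'.2⟩, biprod.lift a a',
    biprod.desc b b', by simp⟩

theorem fac_XY (hcp : IsCotorsionPair E X Y) (hcomp : IsCompleteCP E X Y) {A B : 𝒜}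
    (hA : A ∈ X) (hB : B ∈ Y) (g : A ⟶ B) : Fac (X ∩ Y) g := by
  obtain ⟨-, Y₁, X₁, i, d, hc, hX, hY⟩ := hcomp A
  obtain ⟨l, hl⟩ := ext_along hcp hc hX hB g
  exact ⟨Y₁, ⟨X_ext hcp hc hA hX, hY⟩, i, l, hl⟩

theorem fac_inj (hcp : IsCotorsionPair E X Y) (hcomp : IsCompleteCP E X Y) {K M Z T : 𝒜}
    {i : K ⟶ M} {d : M ⟶ Z} (h : E.conflation i d) (hK : K ∈ Y) (hT : T ∈ X) (g : T ⟶ M)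
    (hg : Fac (X ∩ Y) (g ≫ d)) : Fac (X ∩ Y) g := by
  obtain ⟨W, hW, a, b, hab⟩ := hg
  obtain ⟨b', hb'⟩ := lift_along hcp h hW.1 hK b
  obtain ⟨l, hl⟩ := klift E h (g - a ≫ b') (by simp [hb', hab])
  have h1 := (fac_XY hcp hcomp hT hK l).post i
  rw [hl] at h1
  have h2 : Fac (X ∩ Y) (a ≫ b') := ⟨W, hW, a, b', rfl⟩
  simpa using Fac.add hcp h1 h2

/-- `Hom(T, -)/ω` is bijective on `f` for every `T ∈ X`. -/
def Bij (X Y : Set 𝒜) {A B : 𝒜} (f : A ⟶ B) : Prop :=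
  ∀ T ∈ X, (∀ g : T ⟶ B, ∃ h : T ⟶ A, Fac (X ∩ Y) (g - h ≫ f)) ∧
    (∀ g : T ⟶ A, Fac (X ∩ Y) (g ≫ f) → Fac (X ∩ Y) g)

theorem bij_of_weq (hcp : IsCotorsionPair E X Y) (hcomp : IsCompleteCP E X Y) {A B : 𝒜}
    {f : A ⟶ B} (h : WeqO E (X ∩ Y) Y f) : Bij X Y f := by
  obtain ⟨W, hW, t, K, k, hc, hK⟩ := h
  intro T hT
  constructor
  · intro g
    obtain ⟨l, hl⟩ := lift_along hcp hc hT hK g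
    refine ⟨l ≫ biprod.fst, W, hW, l ≫ biprod.snd, t, ?_⟩
    rw [← hl, biprod.desc_eq]; simp
  · intro g hg
    have := fac_inj hcp hcomp hc hK hT (g ≫ biprod.inl) (by simpa using hg)
    simpa using this.post biprod.fst

theorem weq_of_bij (hwic : IsWIC E) (hcp : IsCotorsionPair E X Y) (hcomp : IsCompleteCP E X Y)
    (hher : IsHereditaryCP E X Y) (hcf : IsContravariantlyFinite (X ∩ Y)) {A B : 𝒜}
    {f : A ⟶ B} (h : Bij X Y f) : WeqO E (X ∩ Y) Y f := by
  obtain ⟨⟨YB, XB, iB, d, hB, hXB, hYB⟩, -⟩ := hcomp B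
  obtain ⟨W, t, hW, ht⟩ := hcf B
  obtain ⟨x, W0, hW0, a, b, hab⟩ := (h XB hXB).1 d
  obtain ⟨c, hc⟩ := ht W0 hW0 b
  have hd : biprod.lift x (a ≫ c) ≫ biprod.desc f t = d := by
    simp [hc, hab]
  obtain ⟨K, k, hK⟩ := defl_cancel E hwic (biprod.lift x (a ≫ c)) (biprod.desc f t)
    ⟨YB, iB, by rw [hd]; exact hB⟩
  refine ⟨W, hW, t, K, k, hK, ?_⟩
  -- reduce to the cover of `A ⊞ W`
  obtain ⟨⟨YA, XA, iA, e, hA, hXA, hYA⟩, -⟩ := hcomp (A ⊞ W)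
  obtain ⟨L, n, m, k', h1, h2, -, -⟩ := comp_ker E hA hK
  refine hher.2 k' m h1 hYA ?_
  obtain ⟨v, hv⟩ := lift_along hcp hA hXB hYA (biprod.lift x (a ≫ c))
  have hvq : v ≫ e ≫ biprod.desc f t = d := by rw [← Category.assoc, hv, hd]
  obtain ⟨u, hu⟩ := lift_along hcp hB hXA hYB (e ≫ biprod.desc f t)
  have hfac : Fac (X ∩ Y) (u ≫ v - 𝟙 XA) := by
    apply fac_inj hcp hcomp hA hYA hXA
    set g := (u ≫ v - 𝟙 XA) ≫ e with hg
    have hgq : g ≫ biprod.desc f t = 0 := by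
      rw [hg, Category.assoc, Preadditive.sub_comp, Category.assoc, hvq, hu]; simp
    have hgq' : (g ≫ biprod.fst) ≫ f = -((g ≫ biprod.snd) ≫ t) := by
      rw [biprod.desc_eq] at hgq
      rw [eq_neg_iff_add_eq_zero]
      simpa using hgq
    have h3 : Fac (X ∩ Y) (g ≫ biprod.fst) := by
      apply (h XA hXA).2
      rw [hgq']
      exact Fac.neg ⟨W, hW, _, _, rfl⟩
    have h4 : Fac (X ∩ Y) ((g ≫ biprod.snd) ≫ (biprod.inr : W ⟶ A ⊞ W)) := ⟨W, hW, _, biprod.inr, rfl⟩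
    have h5 := Fac.add hcp (h3.post biprod.inl) h4
    have h6 : (g ≫ biprod.fst) ≫ biprod.inl + (g ≫ biprod.snd) ≫ biprod.inr = g := by
      apply biprod.hom_ext <;> simp
    rwa [h6] at h5
  obtain ⟨W', hW', p, s, hps⟩ := hfac
  generalize hq : e ≫ biprod.desc f t = q at *
  obtain ⟨w, hw⟩ := lift_along hcp hB hW'.1 hYB (s ≫ q)
  have hnq : n ≫ q = 0 := E.comp_zero h2
  have hpsq : p ≫ s ≫ q = 0 := by
    rw [← Category.assoc, hps, Preadditive.sub_comp, Category.assoc, hvq, hu]; simp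
  have hiBd : iB ≫ d = 0 := E.comp_zero hB
  obtain ⟨y, hy⟩ := klift E hB (n ≫ u - n ≫ p ≫ w) (by
    simp [hu, hw, hpsq, hnq])
  obtain ⟨z₁, hz₁⟩ := klift E h2 (iB ≫ v) (by simp [hvq, hiBd])
  obtain ⟨z₂, hz₂⟩ := klift E h2 (s - w ≫ v) (by simp [hvq, hw])
  refine Y_retract hcp (biprod.lift y (-(n ≫ p))) (biprod.desc z₁ z₂) ?_ (Y_sum hcp hYB hW'.2)
  have := mono_of E h2
  rw [← cancel_mono n, biprod.lift_desc, Preadditive.add_comp, Category.assoc, hz₁,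
    Category.assoc, hz₂, reassoc_of% hy]
  have h7 : n ≫ p ≫ s = n ≫ u ≫ v - n := by rw [hps]; simp
  simp [h7]

theorem bij_two (hcp : IsCotorsionPair E X Y) {A B C : 𝒜} (α : A ⟶ B) (β : B ⟶ C) :
    (Bij X Y α → Bij X Y β → Bij X Y (α ≫ β)) ∧
    (Bij X Y α → Bij X Y (α ≫ β) → Bij X Y β) ∧
    (Bij X Y β → Bij X Y (α ≫ β) → Bij X Y α) := by
  refine ⟨fun ha hb T hT => ⟨fun g => ?_, fun g hg => ?_⟩,
    fun ha hb T hT => ⟨fun g => ?_, fun g hg => ?_⟩,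
    fun ha hb T hT => ⟨fun g => ?_, fun g hg => ?_⟩⟩
  · obtain ⟨x, hx⟩ := (hb T hT).1 g
    obtain ⟨y, hy⟩ := (ha T hT).1 x
    exact ⟨y, by simpa using Fac.add hcp hx (hy.post β)⟩
  · exact (ha T hT).2 g ((hb T hT).2 _ (by simpa using hg))
  · obtain ⟨x, hx⟩ := (hb T hT).1 g
    exact ⟨x ≫ α, by simpa using hx⟩
  · obtain ⟨x, hx⟩ := (ha T hT).1 g
    have h1 : Fac (X ∩ Y) x := by
      apply (hb T hT).2
      simpa using Fac.add hcp hg (hx.post β).neg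
    simpa using Fac.add hcp hx (h1.post α)
  · obtain ⟨x, hx⟩ := (hb T hT).1 (g ≫ β)
    exact ⟨x, (ha T hT).2 _ (by simpa using hx)⟩
  · exact (hb T hT).2 g (by simpa using hg.post β)

end cp

end WeqAux

/-- Two-out-of-three for `Weq_ω`. -/
theorem stmt_10 (E : ExactStructure 𝒜) (hwic : IsWIC E) (X Y : Set 𝒜)
    (hcp : IsCotorsionPair E X Y) (hcomp : IsCompleteCP E X Y)
    (hher : IsHereditaryCP E X Y) (hcf : IsContravariantlyFinite (X ∩ Y))
    {A B C : 𝒜} (α : A ⟶ B) (β : B ⟶ C) :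
    (WeqO E (X ∩ Y) Y α → WeqO E (X ∩ Y) Y β → WeqO E (X ∩ Y) Y (α ≫ β)) ∧
    (WeqO E (X ∩ Y) Y α → WeqO E (X ∩ Y) Y (α ≫ β) → WeqO E (X ∩ Y) Y β) ∧
    (WeqO E (X ∩ Y) Y β → WeqO E (X ∩ Y) Y (α ≫ β) → WeqO E (X ∩ Y) Y α) := by
  have key : ∀ {P Q : 𝒜} (f : P ⟶ Q), WeqO E (X ∩ Y) Y f ↔ WeqAux.Bij X Y f := fun f =>
    ⟨WeqAux.bij_of_weq hcp hcomp, WeqAux.weq_of_bij hwic hcp hcomp hher hcf⟩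
  simp only [key]
  exact WeqAux.bij_two hcp α β
end
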